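/- arXiv:cs/0610132 — 6 statements merged into one kernel-verified Lean document; each statement's English description precedes it below -/
import Mathlib

section
/- Let q be a prime power and F the finite field with q² elements. The set P = {(α,β) ∈ F × F : α^{q+1} = β^q + β} has exactly q³ elements. -/
/-!
`F` has a subfield `K` with `q` elements, over which `α ^ (q + 1)` is the norm of `α` and
`β ^ q + β` is the trace of `β`. The trace `F → K` is a surjective homomorphism of additive groups,
so its fibres all have `|F| / |K| = q` elements. Hence each of the `q²` values of `α`, whatever
its norm, extends to exactly `q` points of the curve.
-/

open Finset Module

section Fibers

variable {G H : Type*} [AddGroup G] [AddMonoid H] [Fintype G] [Fintype H] [DecidableEq H]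

theorem card_fiber_mul_card_of_surjective {φ : G →+ H} (hφ : Function.Surjective φ) (y : H) :
    #{x | φ x = y} * Fintype.card H = Fintype.card G := by
  have card_fiber_eq (z : H) : #{x | φ x = z} = #{x | φ x = y} :=
    AddMonoidHom.card_fiber_eq_of_mem_range φ (hφ z) (hφ y)
  calc #{x | φ x = y} * Fintype.card H
    _ = ∑ z : H, #{x | φ x = z} := by
      simp only [card_fiber_eq, sum_const, card_univ, smul_eq_mul, mul_comm]
    _ = Fintype.card G := (card_eq_sum_card_fiberwise fun _ _ ↦ mem_univ _).symm

theorem card_filter_eq_mul_card_of_surjective {ι : Type*} [Fintype ι] (f : ι → H) {φ : G →+ H}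
    (hφ : Function.Surjective φ) :
    #{p : ι × G | f p.1 = φ p.2} * Fintype.card H = Fintype.card ι * Fintype.card G := by
  have card_eq_sum : #{p : ι × G | f p.1 = φ p.2} = ∑ i, #{x | φ x = f i} := by
    simp only [card_filter, Fintype.sum_prod_type, eq_comm]
  simp only [card_eq_sum, sum_mul, card_fiber_mul_card_of_surjective hφ, sum_const, card_univ,
    smul_eq_mul]

end Fibers

theorem card_norm_eq_trace_mul_card (K L : Type*) [Field K] [Field L] [Algebra K L] [Fintype K]
    [Fintype L] [DecidableEq K] :
    #{p : L × L | Algebra.norm K p.1 = Algebra.trace K L p.2} * Fintype.card K =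
      Fintype.card L ^ 2 := by
  rw [sq]
  exact card_filter_eq_mul_card_of_surjective (Algebra.norm K)
    (φ := (Algebra.trace K L).toAddMonoidHom) (Algebra.trace_surjective K L)

theorem finrank_eq_of_card_eq_pow {K L : Type*} [Field K] [Field L] [Algebra K L] [Finite L] {n : ℕ}
    (h : Nat.card L = Nat.card K ^ n) : finrank K L = n := by
  have : Finite K := Finite.of_injective _ (algebraMap K L).injective
  apply Nat.pow_right_injective (Finite.one_lt_card (α := K))
  exact natCard_eq_pow_finrank.symm.trans h

theorem exists_subfield_card_eq_and_finrank_eq {F : Type*} [Field F] [Finite F] {q n : ℕ}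
    (hF : Nat.card F = q ^ n) : ∃ K : Subfield F, Nat.card K = q ∧ finrank K F = n := by
  have : Fintype F := Fintype.ofFinite F
  have hn : n ≠ 0 := by
    rintro rfl
    exact Finite.one_lt_card.ne' hF
  have hq : IsPrimePow q := by
    rw [← isPrimePow_pow_iff hn, ← hF, Nat.card_eq_fintype_card]
    exact FiniteField.isPrimePow_card F
  obtain ⟨p, k, hp, hk, rfl⟩ := hq
  have : Fact p.Prime := ⟨hp.nat_prime⟩
  rw [← pow_mul] at hF
  have : CharP F p := charP_of_card_eq_prime_pow (Nat.card_eq_fintype_card.symm.trans hF)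
  let : Algebra (ZMod p) F := ZMod.algebra F p
  have finrank_F : finrank (ZMod p) F = k * n :=
    finrank_eq_of_card_eq_pow (by rw [hF, Nat.card_zmod])
  obtain ⟨φ⟩ : Nonempty (GaloisField p k →ₐ[ZMod p] F) := by
    apply FiniteField.nonempty_algHom_of_finrank_dvd
    rw [GaloisField.finrank p hk.ne', finrank_F]
    exact dvd_mul_right k n
  have card_range : Nat.card φ.toRingHom.fieldRange = p ^ k := by
    rw [← GaloisField.card p k hk.ne']
    exact Nat.card_range_of_injective φ.injective
  refine ⟨φ.toRingHom.fieldRange, card_range, finrank_eq_of_card_eq_pow ?_⟩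
  rw [hF, card_range, pow_mul]

/-- The norm-trace curve, of which the Hermitian curve is the case `n = 2`. The subtraction in
`2 * n - 1` never truncates: `n = 0` would give `F` a single element. -/
theorem stmt_1_general (q n : ℕ) (F : Type*) [Field F] [Fintype F] [DecidableEq F]
    (hF : Fintype.card F = q ^ n) :
    #{p : F × F | p.1 ^ (∑ i ∈ range n, q ^ i) = ∑ i ∈ range n, p.2 ^ q ^ i} = q ^ (2 * n - 1) := by
  classical
  obtain ⟨K, rfl, rfl⟩ :=
    exists_subfield_card_eq_and_finrank_eq (Nat.card_eq_fintype_card.trans hF)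
  have : Fintype K := Fintype.ofFinite K
  simp only [← FiniteField.algebraMap_norm_eq_pow_sum K, ← FiniteField.algebraMap_trace_eq_sum_pow,
    (algebraMap K F).injective.eq_iff]
  have : 0 < finrank K F := finrank_pos
  apply Nat.eq_of_mul_eq_mul_right (Nat.card_pos (α := K))
  calc #{p : F × F | Algebra.norm K p.1 = Algebra.trace K F p.2} * Nat.card K
    _ = Fintype.card F ^ 2 := by
      rw [Nat.card_eq_fintype_card, card_norm_eq_trace_mul_card]
    _ = Nat.card K ^ (2 * finrank K F - 1) * Nat.card K := by
      rw [hF, ← pow_mul, ← pow_succ]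
      congr 1
      omega

/-- Let `q` be a prime power and `F` the finite field with `q²` elements. The set
`P = {(α,β) ∈ F × F : α^{q+1} = β^q + β}` has exactly `q³` elements. -/
theorem stmt_1 (q : ℕ) (hq : IsPrimePow q) (F : Type*) [Field F] [Fintype F] [DecidableEq F]
    (hF : Fintype.card F = q ^ 2) :
    (Finset.univ.filter fun p : F × F => p.1 ^ (q + 1) = p.2 ^ q + p.2).card = q ^ 3 := by
  simpa [sum_range_succ, add_comm] using stmt_1_general q 2 F hF
end

section
/- With P_1, …, P_n (n = q³) the rational points of the Hermitian curve and H_i as defined, one has H_i(P_i) = 1 and H_i(P_j) = 0 for j ≠ i. -/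
open MvPolynomial

/-- The polynomial `H_i ∈ F[X,Y]` attached to the rational point `(α, β)` of the Hermitian
curve: `H = −∏_{a ∈ F, a ≠ α} (X − a) · ∏_{b ∈ F, b ≠ β, b^q + b = β^q + β} (Y − b)`. -/
noncomputable def Hpoly (q : ℕ) {F : Type*} [Field F] [Fintype F] [DecidableEq F]
    (α β : F) : MvPolynomial (Fin 2) F :=
  -((∏ a ∈ Finset.univ.erase α, (X 0 - C a)) *
    ∏ b ∈ (Finset.univ.filter fun b : F => b ^ q + b = β ^ q + β).erase β, (X 1 - C b))

/-!
For a monic polynomial `g` that splits with simple roots, the product of `x - b` over the roots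
`b ≠ x` is `g'(x)`. The first product in `Hpoly` is the case `g = X ^ |F| - X`, with derivative
`-1`; the second is the case `g = X ^ q + X - (β ^ q + β)`, with derivative `1`. The latter splits
because it is the translate by `β` of `X ^ q + X`, which divides
`(X ^ q + X) ^ q - (X ^ q + X) = X ^ (q ^ 2) - X`, a divisor of `X ^ |F| - X`.
-/

open scoped Polynomial

theorem prod_erase_sub_eq_eval_derivative {R : Type*} [CommRing R] [IsDomain R] [DecidableEq R]
    {g : R[X]} (hsplits : g.Splits) (hmonic : g.Monic) (hsep : g.Separable)
    {s : Finset R} (hs : ∀ b, b ∈ s ↔ g.IsRoot b) {x : R} (hx : x ∈ s) :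
    ∏ b ∈ s.erase x, (x - b) = g.derivative.eval x := by
  have hroots : s.val = g.roots := by
    refine (Multiset.Nodup.ext s.nodup (Polynomial.nodup_roots hsep)).2 fun b => ?_
    rw [Finset.mem_val, hs, Polynomial.mem_roots hmonic.ne_zero]
  rw [hsplits.eval_root_derivative hmonic (hroots ▸ hx), ← hroots, ← Finset.erase_val,
    ← Finset.prod_eq_multiset_prod]

theorem pow_add_self_dvd_pow_sq_sub_self {R : Type*} [CommRing R] (p : ℕ) [ExpChar R p]
    (n : ℕ) (x : R) : x ^ p ^ n + x ∣ x ^ (p ^ n) ^ 2 - x := by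
  have hfrob : (x ^ p ^ n + x) ^ p ^ n - (x ^ p ^ n + x) = x ^ (p ^ n) ^ 2 - x := by
    rw [add_pow_expChar_pow, ← pow_mul, ← sq]
    ring
  rw [← hfrob]
  exact dvd_sub (dvd_pow_self _ (pow_ne_zero n (expChar_ne_zero R p))) dvd_rfl

theorem derivative_X_pow_add_X {R : Type*} [CommSemiring R] {n : ℕ} (hn : (n : R) = 0) :
    (Polynomial.X ^ n + Polynomial.X : R[X]).derivative = 1 := by
  simp [Polynomial.derivative_X_pow, hn]

theorem splits_X_pow_card_sub_X (F : Type*) [Field F] [Fintype F] :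
    (Polynomial.X ^ Fintype.card F - Polynomial.X : F[X]).Splits := by
  simpa only [Nat.card_eq_fintype_card] using Polynomial.splits_X_pow_nat_card_sub_X (K := F)

section FiniteField

variable {F : Type*} [Field F] [Fintype F]

theorem exists_charP_and_eq_pow_of_card_eq_pow {q m : ℕ} (hF : Fintype.card F = q ^ m) :
    ∃ p n : ℕ, p.Prime ∧ CharP F p ∧ n ≠ 0 ∧ q = p ^ n := by
  have hm : m ≠ 0 := by
    rintro rfl
    exact Fintype.one_lt_card.ne' (hF.trans (pow_zero q))
  obtain ⟨p, n, hp, hn, rfl⟩ : IsPrimePow q :=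
    (isPrimePow_pow_iff hm).1 (hF ▸ FiniteField.isPrimePow_card F)
  have : Fact p.Prime := ⟨hp.nat_prime⟩
  exact ⟨p, n, hp.nat_prime, charP_of_card_eq_prime_pow (hF.trans (pow_mul p n m).symm),
    hn.ne', rfl⟩

theorem splits_X_pow_add_X {p n m : ℕ} [ExpChar F p]
    (hF : Fintype.card F = (p ^ n) ^ (2 * m)) :
    (Polynomial.X ^ p ^ n + Polynomial.X : F[X]).Splits := by
  refine (splits_X_pow_card_sub_X F).of_dvd
    (FiniteField.X_pow_card_sub_X_ne_zero F Fintype.one_lt_card) ?_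
  rw [hF]
  exact (pow_add_self_dvd_pow_sq_sub_self p n _).trans
    (dvd_pow_pow_sub_self_of_dvd (Dvd.intro m rfl))

variable [DecidableEq F]

theorem prod_univ_erase_sub (α : F) : ∏ a ∈ Finset.univ.erase α, (α - a) = -1 := by
  have hmonic : (Polynomial.X ^ Fintype.card F - Polynomial.X : F[X]).Monic :=
    Polynomial.monic_X_pow_sub <| by
      rw [Polynomial.degree_X]
      exact_mod_cast Fintype.one_lt_card (α := F)
  have hsep : (Polynomial.X ^ Fintype.card F - Polynomial.X : F[X]).Separable :=
    galois_poly_separable (ringChar F) _ (ringChar.dvd (FiniteField.cast_card_eq_zero F))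
  rw [prod_erase_sub_eq_eval_derivative (splits_X_pow_card_sub_X F) hmonic hsep
    (fun b => by simp [FiniteField.pow_card]) (Finset.mem_univ α)]
  simp [Polynomial.derivative_X_pow]

theorem prod_erase_sub_of_pow_add_self_eq {q m : ℕ} (hF : Fintype.card F = q ^ (2 * m)) (β : F) :
    ∏ b ∈ (Finset.univ.filter fun b : F => b ^ q + b = β ^ q + β).erase β, (β - b) = 1 := by
  obtain ⟨p, n, hp, _, hn, rfl⟩ := exists_charP_and_eq_pow_of_card_eq_pow hF
  have : Fact p.Prime := ⟨hp⟩
  have hmonic : (Polynomial.X ^ p ^ n + Polynomial.X : F[X]).Monic :=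
    Polynomial.monic_X_pow_add <| by
      rw [Polynomial.degree_X]
      exact_mod_cast Nat.one_lt_pow hn hp.one_lt
  set g : F[X] := (Polynomial.X ^ p ^ n + Polynomial.X).comp (Polynomial.X - Polynomial.C β)
    with hg
  have hderiv : g.derivative = 1 := by
    rw [hg, Polynomial.derivative_comp, derivative_X_pow_add_X (by simp [hn])]
    simp
  have hsep : g.Separable := by
    rw [Polynomial.Separable, hderiv]
    exact isCoprime_one_right
  have hroot (b : F) : b ∈ (Finset.univ.filter fun b : F => b ^ p ^ n + b = β ^ p ^ n + β) ↔
      g.IsRoot b := by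
    have heval : g.eval b = b ^ p ^ n + b - (β ^ p ^ n + β) := by
      simp only [hg, Polynomial.eval_comp, Polynomial.eval_add, Polynomial.eval_sub,
        Polynomial.eval_pow, Polynomial.eval_X, Polynomial.eval_C, sub_pow_char_pow]
      ring
    rw [Finset.mem_filter_univ, Polynomial.IsRoot.def, heval, sub_eq_zero]
  rw [prod_erase_sub_eq_eval_derivative ((splits_X_pow_add_X hF).comp_X_sub_C β)
    (hmonic.comp_X_sub_C β) hsep hroot (by simp), hderiv, Polynomial.eval_one]

theorem eval_Hpoly (q : ℕ) (α β x y : F) :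
    eval ![x, y] (Hpoly q α β) = -((∏ a ∈ Finset.univ.erase α, (x - a)) *
      ∏ b ∈ (Finset.univ.filter fun b : F => b ^ q + b = β ^ q + β).erase β, (y - b)) := by
  simp [Hpoly]

theorem eval_Hpoly_self {q m : ℕ} (hF : Fintype.card F = q ^ (2 * m)) (α β : F) :
    eval ![α, β] (Hpoly q α β) = 1 := by
  rw [eval_Hpoly, prod_univ_erase_sub, prod_erase_sub_of_pow_add_self_eq hF, mul_one, neg_neg]

theorem eval_Hpoly_of_ne {q : ℕ} {α β x y : F} (hxy : x = α → y ^ q + y = β ^ q + β)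
    (hne : (x, y) ≠ (α, β)) : eval ![x, y] (Hpoly q α β) = 0 := by
  rw [eval_Hpoly, neg_eq_zero, mul_eq_zero]
  by_cases hx : x = α
  · have hy : y ≠ β := fun hy => hne (Prod.ext hx hy)
    exact .inr (Finset.prod_eq_zero (i := y) (by simp [hy, hxy hx]) (sub_self y))
  · exact .inl (Finset.prod_eq_zero (i := x) (by simp [hx]) (sub_self x))

theorem stmt_2_general {q m : ℕ} (hF : Fintype.card F = q ^ (2 * m)) {α β x y : F}
    (hxy : x = α → y ^ q + y = β ^ q + β) :
    eval ![x, y] (Hpoly q α β) = if (x, y) = (α, β) then 1 else 0 := by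
  split_ifs with h
  · obtain ⟨rfl, rfl⟩ := Prod.ext_iff.1 h
    exact eval_Hpoly_self hF x y
  · exact eval_Hpoly_of_ne hxy h

end FiniteField

/-- With `P_1, …, P_n` (`n = q³`) the rational points of the Hermitian curve and `H_i` as
defined, one has `H_i(P_i) = 1` and `H_i(P_j) = 0` for `j ≠ i`. -/
theorem stmt_2 (q : ℕ) (hq : IsPrimePow q) (F : Type*) [Field F] [Fintype F] [DecidableEq F]
    (hF : Fintype.card F = q ^ 2) (P : Fin (q ^ 3) → F × F)
    (hPinj : Function.Injective P)
    (hPcurve : ∀ i, (P i).1 ^ (q + 1) = (P i).2 ^ q + (P i).2)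
    (hPsurj : ∀ a b : F, a ^ (q + 1) = b ^ q + b → ∃ i, P i = (a, b))
    (i j : Fin (q ^ 3)) :
    MvPolynomial.eval ![(P j).1, (P j).2] (Hpoly q (P i).1 (P i).2) =
      if j = i then 1 else 0 := by
  have hfiber (hij : (P j).1 = (P i).1) : (P j).2 ^ q + (P j).2 = (P i).2 ^ q + (P i).2 := by
    rw [← hPcurve, ← hPcurve, hij]
  simpa only [Prod.mk.eta, hPinj.eq_iff] using stmt_2_general (m := 1) hF hfiber
end

section
/- Let m be a positive integer and v ∈ F^n. Then the F-vector space F[X,Y,Z]/(⟨X^{q+1} − Y^q − Y⟩ + ⟨Z − H_v, X^{q²} − X⟩^m) has dimension n·m(m+1)/2, where n = q³; equivalently, dim_F R[z]/⟨z − h_v, η⟩^m = n·binom(m+1, 2). -/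
open MvPolynomial

open scoped Polynomial Polynomial.Bivariate

/-!
Let `A = R[x, y]/(f)` with `f` monic in `y`. The translation `z ↦ z + h` turns `⟨z - h, η⟩` into
`⟨z, η⟩`, and a polynomial in `z` lies in `⟨z, η⟩ ^ m` exactly when its `j`-th coefficient is
divisible by `η ^ (m - j)` for every `j < m`. Hence `A[z]/⟨z, η⟩ ^ m ≅ ∏_{j < m} A/(η ^ (m - j))`.
As `A` is free of rank `deg f` over `R[x]`, the factor `A/(η ^ k)` is a sum of `deg f` copies of
`R[x]/(η ^ k)`, so it has rank `deg f * k * deg η`, and `∑_{j < m} (m - j) = binom(m + 1, 2)`.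
-/

theorem sum_fin_sub_eq_choose (m : ℕ) : ∑ j : Fin m, (m - j) = (m + 1).choose 2 := by
  calc ∑ j : Fin m, (m - j)
    _ = ∑ j ∈ Finset.range (m + 1), (m - j) := by
      rw [Finset.sum_range_succ, Nat.sub_self, add_zero, Fin.sum_univ_eq_sum_range (m - ·)]
    _ = (m + 1).choose 2 := by
      rw [Finset.sum_flip fun i => i, Finset.sum_range_id, Nat.choose_two_right]

section SpanXC

variable {A : Type*} [CommSemiring A] {η : A} {m : ℕ} {p : A[X]}

theorem pow_dvd_coeff_mul (hp : ∀ j k, j + k = m → η ^ k ∣ p.coeff j) (r : A[X]) {j k : ℕ}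
    (hjk : j + k = m) : η ^ k ∣ (p * r).coeff j := by
  rw [Polynomial.coeff_mul]
  refine Finset.dvd_sum fun x hx => Dvd.dvd.mul_right ?_ _
  rw [Finset.HasAntidiagonal.mem_antidiagonal] at hx
  exact (pow_dvd_pow η (by omega)).trans (hp x.1 (m - x.1) (by omega))

theorem pow_dvd_coeff_of_mem_span_X_C_pow
    (hp : p ∈ Ideal.span {Polynomial.X, Polynomial.C η} ^ m) :
    ∀ j k, j + k = m → η ^ k ∣ p.coeff j := by
  induction m generalizing p with
  | zero =>
    intro j k hjk
    simp [(Nat.add_eq_zero_iff.1 hjk).2]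
  | succ m ih =>
    rw [pow_succ] at hp
    refine Submodule.mul_induction_on hp (fun a ha b hb j k hjk => ?_)
      fun a b ha hb j k hjk => by
        rw [Polynomial.coeff_add]
        exact dvd_add (ha j k hjk) (hb j k hjk)
    obtain ⟨c, d, rfl⟩ := Ideal.mem_span_pair.1 hb
    rw [mul_add, ← mul_assoc, ← mul_assoc, Polynomial.coeff_add, Polynomial.coeff_mul_C]
    refine dvd_add ?_ ?_
    · cases j with
      | zero => simp
      | succ j =>
        rw [Polynomial.coeff_mul_X]
        exact pow_dvd_coeff_mul (ih ha) c (by omega)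
    · cases k with
      | zero => simp
      | succ k =>
        rw [pow_succ]
        exact mul_dvd_mul_right (pow_dvd_coeff_mul (ih ha) d (by omega)) η

theorem mem_span_X_C_pow_iff :
    p ∈ Ideal.span {Polynomial.X, Polynomial.C η} ^ m ↔
      ∀ j k, j + k = m → η ^ k ∣ p.coeff j := by
  refine ⟨pow_dvd_coeff_of_mem_span_X_C_pow, fun h => ?_⟩
  have X_mem : Polynomial.X ∈ Ideal.span {Polynomial.X, Polynomial.C η} :=
    Ideal.subset_span (by simp)
  have C_mem : Polynomial.C η ∈ Ideal.span {Polynomial.X, Polynomial.C η} :=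
    Ideal.subset_span (by simp)
  rw [p.as_sum_range_C_mul_X_pow]
  refine Ideal.sum_mem _ fun j _ => ?_
  rcases le_total m j with hj | hj
  · exact Ideal.mul_mem_left _ _ (Ideal.pow_le_pow_right hj (Ideal.pow_mem_pow X_mem j))
  · obtain ⟨k, rfl⟩ := Nat.exists_eq_add_of_le' hj
    obtain ⟨c, hc⟩ := h j k (add_comm j k)
    rw [hc, pow_add, map_mul, map_pow, mul_right_comm]
    exact Ideal.mul_mem_right _ _
      (Ideal.mul_mem_mul (Ideal.pow_mem_pow C_mem k) (Ideal.pow_mem_pow X_mem j))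

end SpanXC

section TruncatedCoeffs

variable {A : Type*} [CommRing A] (η : A) (m : ℕ)

/-- The first `m` coefficients of a polynomial, the `j`-th one taken modulo `η ^ (m - j)`. The
index type `Fin m` keeps the exponent `m - j` positive. The kernel is `⟨X, η⟩ ^ m`. -/
noncomputable def truncatedCoeffs :
    A[X] →ₗ[A] Π j : Fin m, A ⧸ Ideal.span {η ^ (m - j : ℕ)} :=
  LinearMap.pi fun j => (Ideal.span {η ^ (m - j : ℕ)}).mkQ ∘ₗ Polynomial.lcoeff A j

theorem ker_truncatedCoeffs : LinearMap.ker (truncatedCoeffs η m) =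
    (Ideal.span {Polynomial.X, Polynomial.C η} ^ m).restrictScalars A := by
  ext p
  have mem_ker : p ∈ LinearMap.ker (truncatedCoeffs η m) ↔
      ∀ j : Fin m, η ^ (m - j : ℕ) ∣ p.coeff j := by
    simp [truncatedCoeffs, LinearMap.ker_pi, LinearMap.ker_comp, Ideal.mem_span_singleton]
  rw [mem_ker, Submodule.restrictScalars_mem, mem_span_X_C_pow_iff]
  refine ⟨fun h j k hjk => ?_, fun h j => h j _ (by omega)⟩
  rcases k.eq_zero_or_pos with rfl | hk
  · simp
  · simpa [← hjk] using h ⟨j, by omega⟩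

theorem truncatedCoeffs_surjective : Function.Surjective (truncatedCoeffs η m) := by
  intro w
  choose u hu using fun j => Submodule.mkQ_surjective _ (w j)
  refine ⟨∑ j : Fin m, Polynomial.monomial j (u j), funext fun i => ?_⟩
  have coeff_eq : (∑ j : Fin m, Polynomial.monomial j (u j)).coeff i = u i := by
    simp [Polynomial.finsetSum_coeff, Polynomial.coeff_monomial, ← Fin.ext_iff]
  rw [← hu i, ← coeff_eq]
  rfl

/-- The decomposition of `A[X]/⟨X, η⟩ ^ m` into the cyclic `A`-modules `A/(η ^ (m - j))`,
`j < m`, given by the coefficients of a representative. -/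
noncomputable def quotientSpanXCPowEquiv :
    (A[X] ⧸ Ideal.span {Polynomial.X, Polynomial.C η} ^ m) ≃ₗ[A]
      Π j : Fin m, A ⧸ Ideal.span {η ^ (m - j : ℕ)} :=
  (Submodule.Quotient.restrictScalarsEquiv A _).symm ≪≫ₗ
    Submodule.quotEquivOfEq _ _ (ker_truncatedCoeffs η m).symm ≪≫ₗ
    (truncatedCoeffs η m).quotKerEquivOfSurjective (truncatedCoeffs_surjective η m)

end TruncatedCoeffs

/-- For an `S`-algebra `A` with a finite basis, the reduction of the coordinates modulo `I`
identifies `A/IA` with a power of `S/I`. -/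
noncomputable def quotientMapEquivPi {S A ι : Type*} [CommRing S] [CommRing A] [Algebra S A]
    [Fintype ι] [DecidableEq ι] (b : Module.Basis ι S A) (I : Ideal S) :
    (A ⧸ I.map (algebraMap S A)) ≃ₗ[S] (ι → S ⧸ I) :=
  (Algebra.TensorProduct.quotIdealMapEquivQuotTensor A I).toLinearEquiv.restrictScalars S ≪≫ₗ
    TensorProduct.congr (LinearEquiv.refl S (S ⧸ I)) b.equivFun ≪≫ₗ
    TensorProduct.piScalarRight S S (S ⧸ I) ι

theorem finrank_quotient_span_X_C_pow {R A : Type*} [CommRing R] [Nontrivial R] [CommRing A]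
    [Algebra R A] [Algebra R[X] A] [IsScalarTower R R[X] A] [Module.Free R[X] A]
    [Module.Finite R[X] A] {η : R[X]} (hη : η.Monic) (m : ℕ) :
    Module.finrank R
        (A[X] ⧸ Ideal.span {Polynomial.X, Polynomial.C (algebraMap R[X] A η)} ^ m) =
      Module.finrank R[X] A * η.natDegree * (m + 1).choose 2 := by
  classical
  have free (k : ℕ) : Module.Free R (R[X] ⧸ Ideal.span {η ^ k}) := (hη.pow k).free_quotient
  have finite (k : ℕ) : Module.Finite R (R[X] ⧸ Ideal.span {η ^ k}) := (hη.pow k).finite_quotient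
  have map_span_pow (k : ℕ) : Ideal.span {algebraMap R[X] A η ^ k} =
      (Ideal.span {η ^ k}).map (algebraMap R[X] A) := by
    rw [Ideal.map_span, Set.image_singleton, map_pow]
  let factorEquiv (k : ℕ) : (A ⧸ Ideal.span {algebraMap R[X] A η ^ k}) ≃ₗ[R]
      (Module.Free.ChooseBasisIndex R[X] A → R[X] ⧸ Ideal.span {η ^ k}) :=
    (Ideal.quotientEquivAlgOfEq R (map_span_pow k)).toLinearEquiv ≪≫ₗ
      (quotientMapEquivPi (Module.Free.chooseBasis R[X] A) _).restrictScalars R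
  rw [((quotientSpanXCPowEquiv (algebraMap R[X] A η) m).restrictScalars R ≪≫ₗ
    LinearEquiv.piCongrRight fun j : Fin m => factorEquiv (m - j)).finrank_eq]
  simp only [Module.finrank_pi_fintype, finrank_quotient_span_eq_natDegree' (hη.pow _),
    hη.natDegree_pow, Finset.sum_const, Finset.card_univ,
    ← Module.finrank_eq_card_chooseBasisIndex, smul_eq_mul]
  rw [← sum_fin_sub_eq_choose, Finset.mul_sum]
  exact Finset.sum_congr rfl fun j _ => by ring

/-- The third isomorphism theorem for the image of an ideal under a surjection. -/
noncomputable def quotientKerSupEquivOfSurjective {R P B : Type*} [CommRing R] [CommRing P]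
    [CommRing B] [Algebra R P] [Algebra R B] {φ : P →ₐ[R] B} (hφ : Function.Surjective φ)
    (J : Ideal P) : (P ⧸ (RingHom.ker φ ⊔ J)) ≃ₐ[R] B ⧸ J.map φ :=
  have ker_eq : RingHom.ker φ ⊔ J = RingHom.ker ((Ideal.Quotient.mkₐ R (J.map φ)).comp φ) := by
    rw [sup_comm, ← Ideal.comap_map_of_surjective' φ hφ]
    ext p
    simp [RingHom.mem_ker, Ideal.Quotient.eq_zero_iff_mem]
  (Ideal.quotientEquivAlgOfEq R ker_eq).trans <|
    Ideal.quotientKerAlgEquivOfSurjective ((Ideal.Quotient.mkₐ_surjective R _).comp hφ)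

section Translation

variable {R : Type*} [CommRing R]

/-- The identification of the two models `MvPolynomial (Fin 2) R` and `R[X][Y]` of the ring of
polynomials in two variables. -/
noncomputable def toBivariate : MvPolynomial (Fin 2) R →ₐ[R] R[X][Y] :=
  aeval ![Polynomial.C Polynomial.X, Polynomial.X]

theorem aevalAeval_toBivariate (H : MvPolynomial (Fin 2) R) :
    Polynomial.aevalAeval (X 0) (X 1) (toBivariate H) =
      rename (Fin.castSucc : Fin 2 → Fin 3) H := by
  suffices (Polynomial.aevalAeval (X 0) (X 1)).comp toBivariate =
    rename (R := R) (Fin.castSucc : Fin 2 → Fin 3) from DFunLike.congr_fun this H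
  ext1 i
  fin_cases i <;> simp [toBivariate]

variable (H : MvPolynomial (Fin 2) R)

/-- The homomorphism `R[X, Y, Z] → R[X][Y][Z]` which fixes `X` and `Y` and sends `Z` to `Z + H`. -/
noncomputable def toTrivariate : MvPolynomial (Fin 3) R →ₐ[R] R[X][Y][X] :=
  aeval (![Polynomial.C (Polynomial.C Polynomial.X), Polynomial.C Polynomial.X,
    Polynomial.X + Polynomial.C (toBivariate H)] : Fin 3 → R[X][Y][X])

/-- The homomorphism `R[X][Y][Z] → R[X, Y, Z]` which fixes `X` and `Y` and sends `Z` to `Z - H`,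
the inverse of `toTrivariate H`. -/
noncomputable def ofTrivariate : R[X][Y][X] →ₐ[R] MvPolynomial (Fin 3) R :=
  Polynomial.eval₂AlgHom (Polynomial.aevalAeval (X 0) (X 1)) (X 2 - rename Fin.castSucc H)
    fun _ => Commute.all _ _

theorem ofTrivariate_C (p : R[X][Y]) :
    ofTrivariate H (Polynomial.C p) = Polynomial.aevalAeval (X 0) (X 1) p :=
  Polynomial.eval₂_C _ _

theorem ofTrivariate_X : ofTrivariate H Polynomial.X = X 2 - rename Fin.castSucc H :=
  Polynomial.eval₂_X _ _

theorem toTrivariate_aevalAeval (p : R[X][Y]) :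
    toTrivariate H (Polynomial.aevalAeval (X 0) (X 1) p) = Polynomial.C p := by
  suffices (toTrivariate H).comp (Polynomial.aevalAeval (X 0) (X 1)) = Polynomial.CAlgHom from
    DFunLike.congr_fun this p
  ext : 2 <;> simp [toTrivariate]

theorem toTrivariate_X_two :
    toTrivariate H (X 2) = Polynomial.X + Polynomial.C (toBivariate H) := by
  simp [toTrivariate]

theorem toTrivariate_X_two_sub_rename :
    toTrivariate H (X 2 - rename Fin.castSucc H) = Polynomial.X := by
  rw [← aevalAeval_toBivariate, map_sub, toTrivariate_aevalAeval]
  exact sub_eq_of_eq_add (toTrivariate_X_two H)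

theorem ofTrivariate_comp_toTrivariate :
    (ofTrivariate H).comp (toTrivariate H) = AlgHom.id R _ := by
  ext1 i
  fin_cases i
  · simp [toTrivariate, ofTrivariate_C]
  · simp [toTrivariate, ofTrivariate_C]
  · change ofTrivariate H (toTrivariate H (X 2)) = X 2
    rw [toTrivariate_X_two, map_add, ofTrivariate_X, ofTrivariate_C, aevalAeval_toBivariate,
      sub_add_cancel]

theorem toTrivariate_comp_ofTrivariate :
    (toTrivariate H).comp (ofTrivariate H) = AlgHom.id R _ :=
  Polynomial.algHom_ext'
    (AlgHom.ext fun p => (congrArg _ (ofTrivariate_C H p)).trans (toTrivariate_aevalAeval H p))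
    ((congrArg _ (ofTrivariate_X H)).trans (toTrivariate_X_two_sub_rename H))

/-- The change of variables `Z ↦ Z + H` as an isomorphism `R[X, Y, Z] ≃ R[X][Y][Z]`. -/
noncomputable def trivariateEquiv : MvPolynomial (Fin 3) R ≃ₐ[R] R[X][Y][X] :=
  AlgEquiv.ofAlgHom (toTrivariate H) (ofTrivariate H) (toTrivariate_comp_ofTrivariate H)
    (ofTrivariate_comp_toTrivariate H)

variable (f : R[X][Y])

/-- The map from `R[X, Y, Z]` to the polynomials in `Z` over the coordinate ring `R[X][Y]/(f)` of
the plane curve `f = 0`, which sends `Z` to `Z + h`, where `h` is the residue class of `H`. -/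
noncomputable def translationToCurve : MvPolynomial (Fin 3) R →ₐ[R] (AdjoinRoot f)[X] :=
  (Polynomial.mapAlgHom ((AdjoinRoot.mkₐ f).restrictScalars R)).comp (trivariateEquiv H)

theorem translationToCurve_apply (p : MvPolynomial (Fin 3) R) :
    translationToCurve H f p = (toTrivariate H p).map (AdjoinRoot.mk f) :=
  rfl

theorem translationToCurve_surjective : Function.Surjective (translationToCurve H f) :=
  (Polynomial.map_surjective _ AdjoinRoot.mk_surjective).comp (trivariateEquiv H).surjective

theorem ker_translationToCurve :
    RingHom.ker (translationToCurve H f) =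
      Ideal.span {Polynomial.aevalAeval (X 0) (X 1) f} := by
  ext p
  calc p ∈ RingHom.ker (translationToCurve H f)
    _ ↔ ∀ i, f ∣ (toTrivariate H p).coeff i := by
      simp [RingHom.mem_ker, translationToCurve_apply, Polynomial.ext_iff, AdjoinRoot.mk_eq_zero]
    _ ↔ toTrivariate H (Polynomial.aevalAeval (X 0) (X 1) f) ∣ toTrivariate H p := by
      rw [toTrivariate_aevalAeval, Polynomial.C_dvd_iff_dvd_coeff]
    _ ↔ p ∈ Ideal.span {Polynomial.aevalAeval (X 0) (X 1) f} := by
      rw [Ideal.mem_span_singleton]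
      exact map_dvd_iff (trivariateEquiv H)

theorem map_span_translationToCurve (η : R[X]) :
    (Ideal.span {X 2 - rename Fin.castSucc H, Polynomial.aeval (X 0) η}).map
        (translationToCurve H f) =
      Ideal.span {Polynomial.X, Polynomial.C (algebraMap R[X] (AdjoinRoot f) η)} := by
  have map_aeval : translationToCurve H f (Polynomial.aeval (X 0) η) =
      Polynomial.C (algebraMap R[X] (AdjoinRoot f) η) := by
    rw [← Polynomial.aevalAeval_C (X 0) (X 1), translationToCurve_apply, toTrivariate_aevalAeval,
      Polynomial.map_C, AdjoinRoot.mk_C, AdjoinRoot.algebraMap_eq]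
  rw [Ideal.map_span, Set.image_pair, map_aeval, translationToCurve_apply,
    toTrivariate_X_two_sub_rename, Polynomial.map_X]

end Translation

theorem finrank_quotient_planeCurve_add_span_pow {R : Type*} [CommRing R] [Nontrivial R]
    {f : R[X][Y]} (hf : f.Monic) {η : R[X]} (hη : η.Monic) (H : MvPolynomial (Fin 2) R) (m : ℕ) :
    Module.finrank R (MvPolynomial (Fin 3) R ⧸
      (Ideal.span {Polynomial.aevalAeval (X 0 : MvPolynomial (Fin 3) R) (X 1) f}
        + Ideal.span {X 2 - rename (Fin.castSucc : Fin 2 → Fin 3) H,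
            Polynomial.aeval (X 0) η} ^ m)) =
      f.natDegree * η.natDegree * (m + 1).choose 2 := by
  have free : Module.Free R[X] (AdjoinRoot f) := hf.free_adjoinRoot
  have finite : Module.Finite R[X] (AdjoinRoot f) := hf.finite_adjoinRoot
  let toCurveEquiv := quotientKerSupEquivOfSurjective (translationToCurve_surjective H f)
  rw [Submodule.add_eq_sup, ← ker_translationToCurve H f, (toCurveEquiv _).toLinearEquiv.finrank_eq,
    Ideal.map_pow, map_span_translationToCurve, finrank_quotient_span_X_C_pow hη,
    (AdjoinRoot.powerBasis' hf).finrank, AdjoinRoot.powerBasis'_dim]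

section Hermitian

variable (R : Type*) [CommRing R]

/-- The equation `Y ^ q + Y - X ^ (q + 1)` of the Hermitian curve, with the sign that makes it
monic in `Y`. -/
noncomputable def hermitianPolynomial (q : ℕ) : R[X][Y] :=
  Polynomial.X ^ q + (Polynomial.X - Polynomial.C (Polynomial.X ^ (q + 1)))

theorem aevalAeval_hermitianPolynomial {A : Type*} [CommRing A] [Algebra R A] (q : ℕ) (x y : A) :
    Polynomial.aevalAeval x y (hermitianPolynomial R q) = -(x ^ (q + 1) - y ^ q - y) := by
  simp only [hermitianPolynomial, map_add, map_sub, map_pow, Polynomial.aevalAeval_X,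
    Polynomial.aevalAeval_Y]
  ring

variable [Nontrivial R] {q : ℕ}

theorem degree_X_sub_C_X_pow_lt (hq : 1 < q) :
    (Polynomial.X - Polynomial.C (Polynomial.X ^ (q + 1)) : R[X][Y]).degree < q := by
  rw [Polynomial.degree_X_sub_C]
  exact_mod_cast hq

theorem hermitianPolynomial_monic (hq : 1 < q) : (hermitianPolynomial R q).Monic :=
  Polynomial.monic_X_pow_add (degree_X_sub_C_X_pow_lt R hq)

theorem natDegree_hermitianPolynomial (hq : 1 < q) : (hermitianPolynomial R q).natDegree = q := by
  rw [hermitianPolynomial, Polynomial.natDegree_add_eq_left_of_degree_lt,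
    Polynomial.natDegree_X_pow]
  rw [Polynomial.degree_X_pow]
  exact degree_X_sub_C_X_pow_lt R hq

theorem X_pow_sub_X_monic (hq : 1 < q) : (Polynomial.X ^ q - Polynomial.X : R[X]).Monic :=
  Polynomial.monic_X_pow_sub <| by
    rw [Polynomial.degree_X]
    exact_mod_cast hq

theorem X_pow_sub_X_natDegree (hq : 1 < q) :
    (Polynomial.X ^ q - Polynomial.X : R[X]).natDegree = q := by
  rw [Polynomial.natDegree_sub_eq_left_of_natDegree_lt, Polynomial.natDegree_X_pow]
  rwa [Polynomial.natDegree_X, Polynomial.natDegree_X_pow]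

end Hermitian

theorem stmt_6_general {R : Type*} [CommRing R] [Nontrivial R] {q : ℕ} (hq : 1 < q)
    (H : MvPolynomial (Fin 2) R) (m : ℕ) :
    Module.finrank R (MvPolynomial (Fin 3) R ⧸
      (Ideal.span {(X 0 : MvPolynomial (Fin 3) R) ^ (q + 1) - X 1 ^ q - X 1}
        + Ideal.span {X 2 - rename (Fin.castSucc : Fin 2 → Fin 3) H,
            (X 0 : MvPolynomial (Fin 3) R) ^ (q ^ 2) - X 0} ^ m)) =
      q ^ 3 * (m + 1).choose 2 := by
  have one_lt_sq : 1 < q ^ 2 := Nat.one_lt_pow two_ne_zero hq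
  have finrank_eq := finrank_quotient_planeCurve_add_span_pow (hermitianPolynomial_monic R hq)
    (X_pow_sub_X_monic R one_lt_sq) H m
  rwa [aevalAeval_hermitianPolynomial, Ideal.span_singleton_neg, map_sub, map_pow,
    Polynomial.aeval_X, natDegree_hermitianPolynomial R hq, X_pow_sub_X_natDegree R one_lt_sq,
    ← pow_succ'] at finrank_eq

/-- Let `m` be a positive integer and `v ∈ F^n`. Then the `F`-vector space
`F[X,Y,Z]/(⟨X^{q+1} − Y^q − Y⟩ + ⟨Z − H_v, X^{q²} − X⟩^m)` has dimension
`n·m(m+1)/2`, where `n = q³`; i.e. `dim_F R[z]/⟨z − h_v, η⟩^m = n·binom(m+1,2)`. -/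
theorem stmt_6 (q : ℕ) (hq : IsPrimePow q) (F : Type*) [Field F] [Fintype F] [DecidableEq F]
    (hF : Fintype.card F = q ^ 2)
    (m : ℕ) (hm : 1 ≤ m)
    (P : Fin (q ^ 3) → F × F)
    (hPinj : Function.Injective P)
    (hPcurve : ∀ i, (P i).1 ^ (q + 1) = (P i).2 ^ q + (P i).2)
    (hPsurj : ∀ a b : F, a ^ (q + 1) = b ^ q + b → ∃ i, P i = (a, b))
    (v : Fin (q ^ 3) → F) :
    Module.finrank F (MvPolynomial (Fin 3) F ⧸
      (Ideal.span {(X 0 : MvPolynomial (Fin 3) F) ^ (q + 1) - X 1 ^ q - X 1}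
        + (Ideal.span {X 2 - MvPolynomial.rename (Fin.castSucc : Fin 2 → Fin 3)
              (∑ i, C (v i) * Hpoly q (P i).1 (P i).2),
            (X 0 : MvPolynomial (Fin 3) F) ^ (q ^ 2) - X 0}) ^ m))
      = q ^ 3 * Nat.choose (m + 1) 2 :=
  stmt_6_general hq.one_lt _ m
end

section
/- Let ψ be a nonzero element of R, written uniquely as ψ = Σ c_{ij} x^i y^j with c_{ij} ∈ F, i ≥ 0, 0 ≤ j ≤ q − 1. Then the F-vector space R/ψR has dimension max{q·i + (q+1)·j : c_{ij} ≠ 0} (this maximum equals the pole order −v_{P∞}(ψ) of ψ at the point at infinity of the Hermitian curve). -/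
set_option synthInstance.maxHeartbeats 1000000
set_option maxHeartbeats 1000000

open MvPolynomial

/-!
The pole order at infinity is a weight function `ρ` on the coordinate ring `A`: it is additive on
products, ultrametric on sums, and two elements of equal weight have leading terms proportional over
`F`. The last property says that the spaces `L n = {a | ρ a < n}` grow by one dimension at each
weight that occurs, and every large number occurs as a weight. If `ρ ψ = d`, then for large `N` the
space `L (N + d)` maps onto `A / ψA` with kernel `ψ · L N`, so the quotient has dimension
`dim L (N + d) - dim L N = d`.

On the curve `x ^ m = y ^ q + y` the weights `q * i + m * j` of the basis monomials `x ^ i * y ^ j`,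
`j < q`, are distinct when `m` and `q` are coprime, and the relation rewrites a product of two basis
monomials as one basis monomial of the total weight plus a term of smaller weight. Taking the
largest weight in the basis expansion therefore defines a weight function.
-/

open scoped Polynomial Polynomial.Bivariate

lemma finrank_quotient_add_finrank_inf {K V : Type*} [DivisionRing K] [AddCommGroup V]
    [Module K V] {S J : Submodule K V} [FiniteDimensional K S] (h : S ⊔ J = ⊤) :
    Module.finrank K (V ⧸ J) + Module.finrank K ↥(S ⊓ J) = Module.finrank K S := by
  have hker : (LinearMap.ker (J.mkQ.domRestrict S)).map S.subtype = S ⊓ J := by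
    rw [LinearMap.ker_domRestrict, J.ker_mkQ, Submodule.map_comap_subtype]
  have hrange : LinearMap.range (J.mkQ.domRestrict S) = ⊤ := by
    rw [LinearMap.range_domRestrict, Submodule.map_mkQ_eq_top, sup_comm, h]
  rw [← hker, Submodule.finrank_map_subtype_eq, ← finrank_top K (V ⧸ J), ← hrange,
    LinearMap.finrank_range_add_finrank_ker]

/-- A weight function on an `F`-algebra, in the sense of Høholdt, van Lint and Pellikaan: the
abstract form of the pole order at a single rational point at infinity. The value `⊥` plays the role
of the pole order `-∞` of zero. -/
structure WeightFunction (F A : Type*) [Field F] [CommRing A] [Algebra F A] where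
  toFun : A → WithBot ℕ
  map_eq_bot_iff : ∀ a, toFun a = ⊥ ↔ a = 0
  map_add_le : ∀ a b, toFun (a + b) ≤ max (toFun a) (toFun b)
  map_smul_le : ∀ (c : F) a, toFun (c • a) ≤ toFun a
  map_mul : ∀ a b, toFun (a * b) = toFun a + toFun b
  exists_map_sub_smul_lt :
    ∀ a b, b ≠ 0 → toFun a = toFun b → ∃ c : F, toFun (a - c • b) < toFun b

namespace WeightFunction

variable {F A : Type*} [Field F] [CommRing A] [Algebra F A]

instance : CoeFun (WeightFunction F A) fun _ ↦ A → WithBot ℕ := ⟨toFun⟩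

/-- The space of elements of weight less than `n`, i.e. the Riemann–Roch space of pole order less
than `n` at infinity. The strict bound makes `sublevel 0` trivial. -/
def sublevel (ρ : WeightFunction F A) (n : ℕ) : Submodule F A where
  carrier := {a | ρ a < n}
  zero_mem' := by
    rw [Set.mem_ofPred_eq, (ρ.map_eq_bot_iff 0).2 rfl]
    exact WithBot.bot_lt_coe n
  add_mem' ha hb := (ρ.map_add_le _ _).trans_lt (max_lt ha hb)
  smul_mem' c a ha := (ρ.map_smul_le c a).trans_lt ha

section Sublevel

variable (ρ : WeightFunction F A)

lemma sublevel_zero : ρ.sublevel 0 = ⊥ :=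
  (Submodule.eq_bot_iff _).2 fun a ha ↦ (ρ.map_eq_bot_iff a).1 (Nat.WithBot.lt_zero_iff.1 ha)

variable {ρ}

lemma mem_sublevel {n : ℕ} {a : A} : a ∈ ρ.sublevel n ↔ ρ a < n := Iff.rfl

lemma mem_sublevel_succ {n : ℕ} {a : A} : a ∈ ρ.sublevel (n + 1) ↔ ρ a ≤ n := by
  rw [mem_sublevel]
  induction ρ a with
  | bot => exact iff_of_true (WithBot.bot_lt_coe _) bot_le
  | coe k => exact WithBot.coe_lt_coe.trans (Nat.lt_succ_iff.trans WithBot.coe_le_coe.symm)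

variable (ρ)

lemma sublevel_mono : Monotone ρ.sublevel := fun _ _ h _ ha ↦
  (mem_sublevel.1 ha).trans_le (Nat.cast_le.2 h)

lemma exists_mem_sublevel (a : A) : ∃ n, a ∈ ρ.sublevel n := by
  induction h : ρ a with
  | bot => exact ⟨0, by rw [mem_sublevel, h]; exact WithBot.bot_lt_coe 0⟩
  | coe n => exact ⟨n + 1, mem_sublevel_succ.2 h.le⟩

variable {ρ}

lemma sublevel_succ_eq_sup_span {n : ℕ} {f : A} (hf : ρ f = n) :
    ρ.sublevel (n + 1) = ρ.sublevel n ⊔ F ∙ f := by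
  have hf_ne : f ≠ 0 := fun h ↦ by simp [(ρ.map_eq_bot_iff f).2 h] at hf
  apply le_antisymm
  · intro a ha
    rcases (mem_sublevel_succ.1 ha).lt_or_eq with hlt | heq
    · exact Submodule.mem_sup_left hlt
    · obtain ⟨c, hc⟩ := ρ.exists_map_sub_smul_lt a f hf_ne (heq.trans hf.symm)
      rw [← sub_add_cancel a (c • f)]
      exact Submodule.add_mem_sup (mem_sublevel.2 (hf ▸ hc))
        (Submodule.mem_span_singleton.2 ⟨c, rfl⟩)
  · refine sup_le (ρ.sublevel_mono n.le_succ) ?_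
    exact (Submodule.span_singleton_le_iff_mem _ _).2 (mem_sublevel_succ.2 hf.le)

lemma sublevel_succ_eq_of_forall_ne {n : ℕ} (h : ∀ f, ρ f ≠ n) :
    ρ.sublevel (n + 1) = ρ.sublevel n :=
  le_antisymm (fun a ha ↦ (mem_sublevel_succ.1 ha).lt_of_ne (h a)) (ρ.sublevel_mono n.le_succ)

instance finiteDimensional_sublevel (n : ℕ) : FiniteDimensional F (ρ.sublevel n) := by
  induction n with
  | zero => rw [sublevel_zero]; infer_instance
  | succ n ih =>
    by_cases h : ∃ f, ρ f = n
    · obtain ⟨f, hf⟩ := h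
      rw [sublevel_succ_eq_sup_span hf]
      infer_instance
    · rwa [sublevel_succ_eq_of_forall_ne (not_exists.1 h)]

lemma finrank_sublevel_succ {n : ℕ} {f : A} (hf : ρ f = n) :
    Module.finrank F (ρ.sublevel (n + 1)) = Module.finrank F (ρ.sublevel n) + 1 := by
  have hf_notMem : f ∉ ρ.sublevel n := fun h ↦ (mem_sublevel.1 h).ne hf
  have hf_ne : f ≠ 0 := fun h ↦ hf_notMem (h ▸ zero_mem _)
  have hdisj := Submodule.disjoint_span_singleton_of_notMem hf_notMem
  have hadd := Submodule.finrank_sup_add_finrank_inf_eq (ρ.sublevel n) (F ∙ f)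
  rwa [hdisj.eq_bot, finrank_bot, finrank_span_singleton hf_ne,
    ← sublevel_succ_eq_sup_span hf] at hadd

lemma finrank_sublevel_add {N : ℕ} (hN : ∀ n ≥ N, ∃ f, ρ f = n) (d : ℕ) :
    Module.finrank F (ρ.sublevel (N + d)) = Module.finrank F (ρ.sublevel N) + d := by
  induction d with
  | zero => rfl
  | succ d ih =>
    obtain ⟨f, hf⟩ := hN (N + d) (Nat.le_add_right N d)
    rw [← add_assoc, finrank_sublevel_succ hf, ih, add_assoc]

end Sublevel

section Quotient

variable {ρ : WeightFunction F A} {ψ : A} {d : ℕ}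

lemma mul_mem_sublevel_add_iff (hψ : ρ ψ = d) {a : A} {n : ℕ} :
    ψ * a ∈ ρ.sublevel (n + d) ↔ a ∈ ρ.sublevel n := by
  rw [mem_sublevel, mem_sublevel, ρ.map_mul, hψ, add_comm, Nat.cast_add]
  exact WithBot.add_lt_add_iff_right WithBot.coe_ne_bot

lemma mulLeft_injective (hψ : ρ ψ = d) : Function.Injective (LinearMap.mulLeft F ψ) := by
  refine (injective_iff_map_eq_zero _).2 fun a ha ↦ ?_
  rw [LinearMap.mulLeft_apply, ← ρ.map_eq_bot_iff, ρ.map_mul, hψ, WithBot.add_eq_bot] at ha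
  exact (ρ.map_eq_bot_iff a).1 (ha.resolve_left WithBot.coe_ne_bot)

lemma sublevel_inf_span_singleton (hψ : ρ ψ = d) (n : ℕ) :
    ρ.sublevel (n + d) ⊓ (Ideal.span {ψ}).restrictScalars F =
      (ρ.sublevel n).map (LinearMap.mulLeft F ψ) := by
  ext a
  simp only [Submodule.mem_inf, Submodule.restrictScalars_mem, Ideal.mem_span_singleton,
    Submodule.mem_map, LinearMap.mulLeft_apply]
  constructor
  · rintro ⟨h, a, rfl⟩
    exact ⟨a, (mul_mem_sublevel_add_iff hψ).1 h, rfl⟩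
  · rintro ⟨a, h, rfl⟩
    exact ⟨(mul_mem_sublevel_add_iff hψ).2 h, dvd_mul_right ψ a⟩

lemma sublevel_sup_span_singleton (hψ : ρ ψ = d) {N : ℕ} (hN : ∀ n ≥ N, ∃ f, ρ f = n) :
    ρ.sublevel (N + d) ⊔ (Ideal.span {ψ}).restrictScalars F = ⊤ := by
  suffices h : ∀ n, ρ.sublevel n ≤ ρ.sublevel (N + d) ⊔ (Ideal.span {ψ}).restrictScalars F by
    refine eq_top_iff.2 fun a _ ↦ ?_
    obtain ⟨n, hn⟩ := ρ.exists_mem_sublevel a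
    exact h n hn
  intro n
  induction n with
  | zero => exact (ρ.sublevel_mono (Nat.zero_le _)).trans le_sup_left
  | succ n ih =>
    rcases lt_or_ge n (N + d) with hn | hn
    · exact (ρ.sublevel_mono hn).trans le_sup_left
    · obtain ⟨f, hf⟩ := hN (n - d) (Nat.le_sub_of_add_le hn)
      have hψf : ρ (ψ * f) = n := by
        rw [ρ.map_mul, hψ, hf, ← Nat.cast_add, Nat.add_sub_cancel' (by omega)]
      rw [sublevel_succ_eq_sup_span hψf]
      refine sup_le ih (le_trans ?_ le_sup_right)
      exact (Submodule.span_singleton_le_iff_mem _ _).2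
        (Ideal.mem_span_singleton.2 (dvd_mul_right ψ f))

theorem finrank_quotient_span_singleton (hψ : ρ ψ = d) {N : ℕ} (hN : ∀ n ≥ N, ∃ f, ρ f = n) :
    Module.finrank F (A ⧸ Ideal.span {ψ}) = d := by
  have hquot : Module.finrank F (A ⧸ (Ideal.span {ψ}).restrictScalars F) =
      Module.finrank F (A ⧸ Ideal.span {ψ}) :=
    (Submodule.Quotient.restrictScalarsEquiv F (Ideal.span {ψ})).finrank_eq
  have hinf : Module.finrank F ↥(ρ.sublevel (N + d) ⊓ (Ideal.span {ψ}).restrictScalars F) =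
      Module.finrank F (ρ.sublevel N) := by
    rw [sublevel_inf_span_singleton hψ]
    exact (Submodule.equivMapOfInjective _ (mulLeft_injective hψ) _).finrank_eq.symm
  have hadd := finrank_quotient_add_finrank_inf (sublevel_sup_span_singleton hψ hN)
  rw [hquot, hinf, finrank_sublevel_add hN] at hadd
  omega

end Quotient

end WeightFunction

section BasisWeight

variable {ι R M : Type*} [Ring R] [AddCommGroup M] [Module R M]

/-- The largest weight `w i` of a basis vector `b i` occurring in the expansion of `a`; it is `⊥`
for `a = 0`. -/
noncomputable def basisWeight (b : Module.Basis ι R M) (w : ι → ℕ) (a : M) : WithBot ℕ :=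
  (b.repr a).support.sup fun i ↦ (w i : WithBot ℕ)

variable {b : Module.Basis ι R M} {w : ι → ℕ} {a a' : M}

lemma basisWeight_lt_coe_iff {n : ℕ} :
    basisWeight b w a < n ↔ ∀ i, b.repr a i ≠ 0 → w i < n := by
  simp [basisWeight]

lemma coe_le_basisWeight {i : ι} (hi : b.repr a i ≠ 0) :
    (w i : WithBot ℕ) ≤ basisWeight b w a :=
  Finset.le_sup (f := fun i ↦ (w i : WithBot ℕ)) (Finsupp.mem_support_iff.2 hi)

lemma basisWeight_eq_bot_iff : basisWeight b w a = ⊥ ↔ a = 0 := by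
  rw [← b.repr.map_eq_zero_iff, Finsupp.ext_iff]
  simp [basisWeight, Finset.sup_eq_bot_iff]

lemma exists_basisWeight_eq (ha : a ≠ 0) : ∃ p, b.repr a p ≠ 0 ∧ basisWeight b w a = w p := by
  have hsupp : (b.repr a).support.Nonempty := by simpa using ha
  obtain ⟨p, hp, h⟩ := Finset.exists_mem_eq_sup _ hsupp fun i ↦ (w i : WithBot ℕ)
  exact ⟨p, Finsupp.mem_support_iff.1 hp, h⟩

lemma basisWeight_basis [Nontrivial R] (i : ι) : basisWeight b w (b i) = w i := by
  simp [basisWeight]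

lemma basisWeight_repr_symm {c : ι →₀ R} (hc : c ≠ 0) :
    basisWeight b w (b.repr.symm c) = (c.support.sup w : ℕ) := by
  rw [basisWeight, LinearEquiv.apply_symm_apply]
  exact (Finset.coe_sup_of_nonempty (Finsupp.support_nonempty_iff.2 hc) w).symm

lemma basisWeight_add_le :
    basisWeight b w (a + a') ≤ max (basisWeight b w a) (basisWeight b w a') := by
  classical
  rw [basisWeight, map_add, basisWeight, basisWeight, ← Finset.sup_union]
  exact Finset.sup_mono Finsupp.support_add

lemma basisWeight_smul_le (c : R) : basisWeight b w (c • a) ≤ basisWeight b w a := by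
  rw [basisWeight, map_smul]
  exact Finset.sup_mono Finsupp.support_smul

lemma basisWeight_smul_of_isUnit {c : R} (hc : IsUnit c) :
    basisWeight b w (c • a) = basisWeight b w a := by
  obtain ⟨u, rfl⟩ := hc
  refine (basisWeight_smul_le _).antisymm ?_
  simpa [smul_smul] using basisWeight_smul_le (b := b) (w := w) (a := (u : R) • a) (↑u⁻¹ : R)

lemma basisWeight_neg : basisWeight b w (-a) = basisWeight b w a := by
  rw [basisWeight, map_neg, Finsupp.support_neg, basisWeight]

lemma basisWeight_add_of_lt (h : basisWeight b w a' < basisWeight b w a) :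
    basisWeight b w (a + a') = basisWeight b w a := by
  apply le_antisymm
  · exact basisWeight_add_le.trans (max_le le_rfl h.le)
  · have hle : basisWeight b w (a + a' + -a') ≤ _ := basisWeight_add_le
    rw [add_neg_cancel_right, basisWeight_neg] at hle
    exact (le_max_iff.1 hle).resolve_right h.not_ge

lemma basisWeight_sub_of_lt (h : basisWeight b w a' < basisWeight b w a) :
    basisWeight b w (a - a') = basisWeight b w a := by
  rw [sub_eq_add_neg]
  exact basisWeight_add_of_lt (basisWeight_neg.trans_lt h)

lemma basisWeight_sum_lt {κ : Type*} {s : Finset κ} {f : κ → M} {n : ℕ}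
    (h : ∀ k ∈ s, basisWeight b w (f k) < n) : basisWeight b w (∑ k ∈ s, f k) < n := by
  refine Finset.sum_induction f (basisWeight b w · < n)
    (fun _ _ hx hy ↦ basisWeight_add_le.trans_lt (max_lt hx hy)) ?_ h
  rw [basisWeight_eq_bot_iff.2 rfl]
  exact WithBot.bot_lt_coe n

end BasisWeight

lemma exists_basisWeight_sub_smul_lt {ι F V : Type*} [Field F] [AddCommGroup V] [Module F V]
    {b : Module.Basis ι F V} {w : ι → ℕ} (hw : Function.Injective w) {a a' : V} (ha' : a' ≠ 0)
    (h : basisWeight b w a = basisWeight b w a') :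
    ∃ c : F, basisWeight b w (a - c • a') < basisWeight b w a' := by
  obtain ⟨p, hp, hwp⟩ := exists_basisWeight_eq (b := b) (w := w) ha'
  refine ⟨b.repr a p / b.repr a' p, ?_⟩
  have hle : basisWeight b w (a - (b.repr a p / b.repr a' p) • a') ≤ w p := by
    rw [sub_eq_add_neg]
    refine basisWeight_add_le.trans (max_le (h.trans hwp).le ?_)
    rw [basisWeight_neg, ← hwp]
    exact basisWeight_smul_le _
  rw [hwp, basisWeight_lt_coe_iff]
  intro i hi
  refine (WithBot.coe_le_coe.1 ((coe_le_basisWeight hi).trans hle)).lt_of_ne fun hip ↦ hi ?_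
  simp [hw hip, hp]

lemma mul_eq_sum_repr {ι R A : Type*} [CommRing R] [Ring A] [Algebra R A]
    (b : Module.Basis ι R A) (a a' : A) :
    a * a' = ∑ t ∈ (b.repr a).support ×ˢ (b.repr a').support,
      (b.repr a t.1 * b.repr a' t.2) • (b t.1 * b t.2) := by
  conv_lhs => rw [← b.linearCombination_repr a, ← b.linearCombination_repr a']
  simp only [Finsupp.linearCombination_apply, Finsupp.sum, Finset.sum_mul_sum,
    Finset.sum_product, smul_mul_smul_comm]

lemma basisWeight_mul {ι F A : Type*} [Field F] [Ring A] [Algebra F A]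
    {b : Module.Basis ι F A} {w : ι → ℕ} (hw : Function.Injective w)
    (hmul : ∀ i j, basisWeight b w (b i * b j) = w i + w j) (a a' : A) :
    basisWeight b w (a * a') = basisWeight b w a + basisWeight b w a' := by
  classical
  rcases eq_or_ne a 0 with rfl | ha
  · simp [basisWeight_eq_bot_iff.2]
  rcases eq_or_ne a' 0 with rfl | ha'
  · simp [basisWeight_eq_bot_iff.2]
  obtain ⟨p, hp, hwp⟩ := exists_basisWeight_eq (b := b) (w := w) ha
  obtain ⟨r, hr, hwr⟩ := exists_basisWeight_eq (b := b) (w := w) ha'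
  have hlead : basisWeight b w ((b.repr a p * b.repr a' r) • (b p * b r)) = (w p + w r : ℕ) := by
    rw [basisWeight_smul_of_isUnit (mul_ne_zero hp hr).isUnit, hmul, Nat.cast_add]
  have hpr : (p, r) ∈ (b.repr a).support ×ˢ (b.repr a').support := by simp [hp, hr]
  rw [mul_eq_sum_repr b, ← Finset.add_sum_erase _ _ hpr, basisWeight_add_of_lt, hlead, hwp, hwr,
    Nat.cast_add]
  rw [hlead]
  refine basisWeight_sum_lt fun ⟨i, j⟩ hij ↦ (basisWeight_smul_le _).trans_lt ?_
  simp only [Finset.mem_erase, Finset.mem_product, Finsupp.mem_support_iff, ne_eq,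
    Prod.mk.injEq] at hij
  obtain ⟨hne, hi, hj⟩ := hij
  have hip : w i ≤ w p := WithBot.coe_le_coe.1 ((coe_le_basisWeight hi).trans hwp.le)
  have hjr : w j ≤ w r := WithBot.coe_le_coe.1 ((coe_le_basisWeight hj).trans hwr.le)
  have hlt : w i + w j < w p + w r := by
    refine (add_le_add hip hjr).lt_of_ne fun heq ↦ hne ⟨hw ?_, hw ?_⟩ <;> omega
  rw [hmul]
  exact_mod_cast hlt

/-- The weight function taking the largest weight in the expansion with respect to a basis with
pairwise distinct weights that add up under multiplication of basis vectors. -/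
noncomputable def WeightFunction.ofBasis {ι F A : Type*} [Field F] [CommRing A] [Algebra F A]
    (b : Module.Basis ι F A) (w : ι → ℕ) (hw : Function.Injective w)
    (hmul : ∀ i j, basisWeight b w (b i * b j) = w i + w j) : WeightFunction F A where
  toFun := basisWeight b w
  map_eq_bot_iff _ := basisWeight_eq_bot_iff
  map_add_le _ _ := basisWeight_add_le
  map_smul_le c _ := basisWeight_smul_le c
  map_mul := basisWeight_mul hw hmul
  exists_map_sub_smul_lt _ _ := exists_basisWeight_sub_smul_lt hw

section MonomialBasis

open Polynomial.Bivariate (equivMvPolynomial)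

variable {R : Type*} [CommRing R] {g : R[X][Y]} {d : ℕ}

/-- The `R`-basis `x ^ i * y ^ j`, `j < d`, of `R[x][y] / (g)` for `g` monic of degree `d` in
`y`. -/
noncomputable def adjoinRootMonomialBasis (hg : g.Monic) (hd : g.natDegree = d) :
    Module.Basis (ℕ × Fin d) R (AdjoinRoot g) :=
  (Polynomial.basisMonomials R).smulTower ((AdjoinRoot.powerBasis' hg).basis.reindex
    (finCongr ((AdjoinRoot.powerBasis'_dim hg).trans hd)))

lemma adjoinRootMonomialBasis_apply (hg : g.Monic) (hd : g.natDegree = d) (p : ℕ × Fin d) :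
    adjoinRootMonomialBasis hg hd p =
      AdjoinRoot.mk g (Polynomial.C (Polynomial.X ^ p.1) * Y ^ (p.2 : ℕ)) := by
  simp [adjoinRootMonomialBasis, Module.Basis.smulTower_apply, Algebra.smul_def,
    Polynomial.monomial_one_right_eq_X_pow, AdjoinRoot.algebraMap_eq]

variable {I : Ideal (MvPolynomial (Fin 2) R)}

/-- The identification of `R[x][y] / (g)` with the corresponding quotient of the polynomial ring in
two variables; `X 0` is `x` and `X 1` is `y`. -/
noncomputable def adjoinRootEquivQuotient (hI : I = Ideal.span {equivMvPolynomial R g}) :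
    AdjoinRoot g ≃ₐ[R] MvPolynomial (Fin 2) R ⧸ I :=
  Ideal.quotientEquivAlg (Ideal.span {g}) I (equivMvPolynomial R)
    (by rw [hI, Ideal.map_span, Set.image_singleton]; rfl)

lemma adjoinRootEquivQuotient_mk (hI : I = Ideal.span {equivMvPolynomial R g}) (f : R[X][Y]) :
    adjoinRootEquivQuotient hI (AdjoinRoot.mk g f) =
      Ideal.Quotient.mk I (equivMvPolynomial R f) := rfl

end MonomialBasis

/-- The coordinate ring of the affine plane curve `x ^ m = y ^ q + y`; the Hermitian curve is the
case `m = q + 1`. -/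
abbrev CurveRing (R : Type*) [CommRing R] (m q : ℕ) : Type _ :=
  MvPolynomial (Fin 2) R ⧸ Ideal.span {(X 0 : MvPolynomial (Fin 2) R) ^ m - X 1 ^ q - X 1}

namespace CurveRing

/-- The pole order `q * i + m * j` at infinity of the monomial `x ^ i * y ^ j` with index
`(i, j)`. -/
def weight (m q : ℕ) (p : ℕ × Fin q) : ℕ := q * p.1 + m * (p.2 : ℕ)

section Weight

variable {m q : ℕ}

lemma weight_injective (hmq : m.Coprime q) : Function.Injective (weight m q) := by
  rintro ⟨i, j⟩ ⟨k, l⟩ h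
  have hmod : m * (j : ℕ) ≡ m * l [MOD q] := by
    simpa [Nat.ModEq, weight] using congrArg (· % q) h
  obtain rfl : j = l := Fin.ext <|
    (Nat.ModEq.cancel_left_of_coprime hmq.symm hmod).eq_of_lt_of_lt j.isLt l.isLt
  simpa [weight, j.pos.ne'] using h

lemma exists_weight_eq (hmq : m.Coprime q) (hq : 0 < q) {n : ℕ} (hn : (q - 1) * (m - 1) ≤ n) :
    ∃ p, weight m q p = n := by
  obtain ⟨i, j, hij⟩ := Nat.exists_add_mul_eq_of_gcd_dvd_of_mul_pred_le q m n
    (by simp [hmq.symm.gcd_eq_one]) hn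
  refine ⟨(i + m * (j / q), ⟨j % q, Nat.mod_lt j hq⟩), ?_⟩
  calc q * (i + m * (j / q)) + m * (j % q) = i * q + (q * (j / q) + j % q) * m := by ring
    _ = n := by rw [Nat.div_add_mod, hij]

end Weight

section Basis

variable (R : Type*) [CommRing R] (m q : ℕ)

/-- The class of the first coordinate. -/
noncomputable def x : CurveRing R m q := Ideal.Quotient.mk _ (X 0)

/-- The class of the second coordinate. -/
noncomputable def y : CurveRing R m q := Ideal.Quotient.mk _ (X 1)

lemma x_pow : x R m q ^ m = y R m q ^ q + y R m q := by
  rw [x, y, ← map_pow, ← map_pow, ← map_add, Ideal.Quotient.eq, ← sub_sub]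
  exact Ideal.mem_span_singleton_self _

/-- The equation of the curve as a polynomial in `y` over `R[x]`, with the sign that makes it
monic. -/
noncomputable def equation : R[X][Y] := Y ^ q + (Y - Polynomial.C (Polynomial.X ^ m))

lemma span_equivMvPolynomial_equation :
    Ideal.span {(X 0 : MvPolynomial (Fin 2) R) ^ m - X 1 ^ q - X 1} =
      Ideal.span {Polynomial.Bivariate.equivMvPolynomial R (equation R m q)} := by
  rw [← Ideal.span_singleton_neg]
  congr 2
  simp only [equation, map_add, map_sub, map_pow, Polynomial.Bivariate.equivMvPolynomial_X,
    Polynomial.Bivariate.equivMvPolynomial_C_X]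
  ring

variable {q} [Nontrivial R]

lemma degree_Y_sub_C_X_pow_lt (hq : 2 ≤ q) :
    (Y - Polynomial.C (Polynomial.X ^ m) : R[X][Y]).degree < q := by
  rw [Polynomial.degree_X_sub_C]
  exact_mod_cast hq

lemma monic_equation (hq : 2 ≤ q) : (equation R m q).Monic :=
  Polynomial.monic_X_pow_add (degree_Y_sub_C_X_pow_lt R m hq)

lemma natDegree_equation (hq : 2 ≤ q) : (equation R m q).natDegree = q := by
  have hlt := degree_Y_sub_C_X_pow_lt R m hq
  rw [← Polynomial.degree_X_pow (R := R[X])] at hlt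
  rw [equation, Polynomial.natDegree_add_eq_left_of_degree_lt hlt, Polynomial.natDegree_X_pow]

/-- The basis of monomials `x ^ i * y ^ j` with `j < q`. -/
noncomputable def basis (hq : 2 ≤ q) : Module.Basis (ℕ × Fin q) R (CurveRing R m q) :=
  (adjoinRootMonomialBasis (monic_equation R m hq) (natDegree_equation R m hq)).map
    (adjoinRootEquivQuotient (span_equivMvPolynomial_equation R m q)).toLinearEquiv

variable {R m}

lemma basis_apply (hq : 2 ≤ q) (p : ℕ × Fin q) :
    basis R m hq p = x R m q ^ p.1 * y R m q ^ (p.2 : ℕ) := by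
  rw [basis, Module.Basis.map_apply, adjoinRootMonomialBasis_apply, AlgEquiv.toLinearEquiv_apply,
    adjoinRootEquivQuotient_mk]
  simp [x, y]

lemma basis_repr_symm (hq : 2 ≤ q) (c : (ℕ × Fin q) →₀ R) :
    (basis R m hq).repr.symm c =
      Ideal.Quotient.mk _ (∑ p ∈ c.support, C (c p) * X 0 ^ p.1 * X 1 ^ (p.2 : ℕ)) := by
  rw [Module.Basis.repr_symm_apply, Finsupp.linearCombination_apply, Finsupp.sum, map_sum]
  refine Finset.sum_congr rfl fun p _ ↦ ?_
  rw [basis_apply, mul_assoc, ← smul_eq_C_mul]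
  rfl

lemma basis_mul_basis_of_lt (hq : 2 ≤ q) {i k : ℕ} {j l : Fin q} (h : (j + l : ℕ) < q) :
    basis R m hq (i, j) * basis R m hq (k, l) = basis R m hq (i + k, ⟨j + l, h⟩) := by
  simp only [basis_apply]
  ring

lemma basis_mul_basis_of_eq_add (hq : 2 ≤ q) {i k e : ℕ} {j l : Fin q} (h : (j + l : ℕ) = q + e)
    (he : e + 1 < q) :
    basis R m hq (i, j) * basis R m hq (k, l) =
      basis R m hq (i + k + m, ⟨e, by omega⟩) - basis R m hq (i + k, ⟨e + 1, he⟩) := by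
  simp only [basis_apply]
  calc x R m q ^ i * y R m q ^ (j : ℕ) * (x R m q ^ k * y R m q ^ (l : ℕ))
      = x R m q ^ (i + k) * y R m q ^ (j + l : ℕ) := by ring
    _ = x R m q ^ (i + k) * (y R m q ^ q + y R m q) * y R m q ^ e
          - x R m q ^ (i + k) * y R m q ^ (e + 1) := by rw [h]; ring
    _ = x R m q ^ (i + k + m) * y R m q ^ e
          - x R m q ^ (i + k) * y R m q ^ (e + 1) := by rw [← x_pow, pow_add _ (i + k) m]

lemma basisWeight_basis_mul_basis (hq : 2 ≤ q) (hm : 0 < m) (p r : ℕ × Fin q) :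
    basisWeight (basis R m hq) (weight m q) (basis R m hq p * basis R m hq r) =
      weight m q p + weight m q r := by
  obtain ⟨i, j⟩ := p
  obtain ⟨k, l⟩ := r
  rw [← Nat.cast_add]
  rcases lt_or_ge (j + l : ℕ) q with hjl | hjl
  · rw [basis_mul_basis_of_lt hq hjl, basisWeight_basis]
    congr 1
    simp only [weight]
    ring
  · obtain ⟨e, he⟩ := Nat.exists_eq_add_of_le hjl
    have he_lt : e + 1 < q := by omega
    have hweight : weight m q (i + k + m, ⟨e, by omega⟩) =
        weight m q (i, j) + weight m q (k, l) := by
      simp only [weight]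
      have hmul : m * (j + l : ℕ) = m * (q + e) := congrArg (m * ·) he
      linarith
    have hlower : weight m q (i + k, ⟨e + 1, he_lt⟩) <
        weight m q (i + k + m, ⟨e, by omega⟩) := by
      simp only [weight]
      nlinarith
    rw [basis_mul_basis_of_eq_add hq he he_lt, basisWeight_sub_of_lt,
      basisWeight_basis, hweight]
    rw [basisWeight_basis, basisWeight_basis]
    exact_mod_cast hlower

end Basis

/-- The pole order at the point at infinity of the curve `x ^ m = y ^ q + y`. -/
noncomputable def poleOrder (F : Type*) [Field F] {m q : ℕ} (hq : 2 ≤ q) (hmq : m.Coprime q) :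
    WeightFunction F (CurveRing F m q) :=
  .ofBasis (basis F m hq) (weight m q) (weight_injective hmq) <|
    basisWeight_basis_mul_basis hq <| Nat.pos_of_ne_zero <| by
      rintro rfl
      rw [Nat.coprime_zero_left] at hmq
      omega

end CurveRing

theorem stmt_8_general {F : Type*} [Field F] {m q : ℕ} (hq : 2 ≤ q) (hmq : m.Coprime q)
    {c : (ℕ × Fin q) →₀ F} (hc : c ≠ 0) :
    Module.finrank F (CurveRing F m q ⧸ Ideal.span
      {(Ideal.Quotient.mk _ (∑ p ∈ c.support, C (c p) * X 0 ^ p.1 * X 1 ^ (p.2 : ℕ)) :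
        CurveRing F m q)}) =
      c.support.sup fun p ↦ q * p.1 + m * (p.2 : ℕ) := by
  rw [← CurveRing.basis_repr_symm hq]
  refine WeightFunction.finrank_quotient_span_singleton (ρ := CurveRing.poleOrder F hq hmq)
    (basisWeight_repr_symm hc) (N := (q - 1) * (m - 1)) fun n hn ↦ ?_
  obtain ⟨p, rfl⟩ := CurveRing.exists_weight_eq hmq (by omega) hn
  exact ⟨CurveRing.basis F m hq p, basisWeight_basis p⟩

/-- Let `ψ` be a nonzero element of `R = F[X,Y]/⟨X^{q+1} − Y^q − Y⟩`, written (uniquely) as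
`ψ = Σ c_{ij} x^i y^j` with `c_{ij} ∈ F`, `i ≥ 0`, `0 ≤ j ≤ q − 1`. Then the `F`-vector
space `R/ψR` has dimension `max{q·i + (q+1)·j : c_{ij} ≠ 0}` (this maximum equals the pole
order `−v_{P∞}(ψ)` of `ψ` at the point at infinity of the Hermitian curve). -/
theorem stmt_8 (q : ℕ) (hq : IsPrimePow q) (F : Type*) [Field F] [Fintype F]
    (hF : Fintype.card F = q ^ 2) (c : (ℕ × Fin q) →₀ F) (hc : c ≠ 0) :
    Module.finrank F
      ((MvPolynomial (Fin 2) F ⧸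
          Ideal.span {(X 0 : MvPolynomial (Fin 2) F) ^ (q + 1) - X 1 ^ q - X 1}) ⧸
        Ideal.span {Ideal.Quotient.mk
          (Ideal.span {(X 0 : MvPolynomial (Fin 2) F) ^ (q + 1) - X 1 ^ q - X 1})
          (∑ p ∈ c.support, C (c p) * X 0 ^ p.1 * X 1 ^ (p.2 : ℕ))})
      = c.support.sup (fun p => q * p.1 + (q + 1) * (p.2 : ℕ)) := by
  exact stmt_8_general hq.two_le (by simp) hc
end

section
/- Let u be a positive integer with u < n = q³. If μ ∈ R is nonzero with deg_u(μ) ≤ u (i.e., μ ∈ L(uP∞)), then the number of points P_i (1 ≤ i ≤ n) with μ(P_i) = 0 is at most u. Consequently the evaluation map is injective on L(uP∞), and the Hermitian code C_u = ev(L(uP∞)) has minimum distance at least n − u. -/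
open MvPolynomial

/-- The `F`-linear combination of the monomials `X^i Y^j` (`0 ≤ j ≤ q−1`) of `F[X,Y]`
with coefficient family `c`; these monomials represent the canonical `F`-basis of `R`. -/
noncomputable def monoSum2 {q : ℕ} {F : Type*} [Field F] (c : (ℕ × Fin q) →₀ F) :
    MvPolynomial (Fin 2) F :=
  ∑ p ∈ c.support, C (c p) * X 0 ^ p.1 * X 1 ^ (p.2 : ℕ)

/-! Give `x ^ i * y ^ j` the weight `b * i + a * j`, so that the curve reads `x ^ a = y ^ b + ⋯`
with a remainder of weight less than `a * b`. If `φ` has leading monomial `x ^ s * y ^ t` with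
`t < b`, then modulo the curve and `φ` every monomial is a combination of those divisible by none of
`y ^ b`, `x ^ s * y ^ t` and `x ^ (s + a)`. There are `b * s + a * t` of these, which is the
weight of `φ`. Hence the algebra of functions on the zeros of `φ` on the curve has at most this
dimension, and its dimension is the number of zeros. -/

section LowerSpan

variable {R A : Type*} [CommRing R] [CommRing A] [Algebra R A] {x y f : A} {a b s t w w' : ℕ}

variable (R x y a b w) in
/-- The span of the monomials `x ^ i * y ^ j` of weight `b * i + a * j` less than `w`: the elements
of pole order less than `w` at infinity when `x` and `y` have pole orders `b` and `a`. -/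
def lowerSpan : Submodule R A :=
  Submodule.span R {f | ∃ i j, b * i + a * j < w ∧ x ^ i * y ^ j = f}

lemma monomial_mem_lowerSpan {i j : ℕ} (h : b * i + a * j < w) :
    x ^ i * y ^ j ∈ lowerSpan R x y a b w :=
  Submodule.subset_span ⟨i, j, h, rfl⟩

lemma lowerSpan_le_iff {W : Submodule R A} :
    lowerSpan R x y a b w ≤ W ↔ ∀ i j, b * i + a * j < w → x ^ i * y ^ j ∈ W := by
  refine Submodule.span_le.trans ⟨fun h i j hij ↦ h ⟨i, j, hij, rfl⟩, ?_⟩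
  rintro h _ ⟨i, j, hij, rfl⟩
  exact h i j hij

lemma lowerSpan_mono (h : w ≤ w') : lowerSpan R x y a b w ≤ lowerSpan R x y a b w' :=
  lowerSpan_le_iff.2 fun _ _ hij ↦ monomial_mem_lowerSpan (hij.trans_le h)

lemma monomial_mul_mem_lowerSpan (hf : f ∈ lowerSpan R x y a b w) (i j : ℕ) :
    x ^ i * y ^ j * f ∈ lowerSpan R x y a b (b * i + a * j + w) := by
  suffices h : lowerSpan R x y a b w ≤ (lowerSpan R x y a b (b * i + a * j + w)).comap
      (LinearMap.mulLeft R (x ^ i * y ^ j)) from h hf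
  refine lowerSpan_le_iff.2 fun k l hkl ↦ ?_
  have hmul : x ^ i * y ^ j * (x ^ k * y ^ l) = x ^ (i + k) * y ^ (j + l) := by ring
  rw [Submodule.mem_comap, LinearMap.mulLeft_apply, hmul]
  exact monomial_mem_lowerSpan (by linarith)

lemma aeval_mem_lowerSpan {g : MvPolynomial (Fin 2) R}
    (hg : ∀ d ∈ g.support, b * d 0 + a * d 1 < w) : aeval ![x, y] g ∈ lowerSpan R x y a b w := by
  rw [aeval_def, eval₂_eq']
  refine Submodule.sum_mem _ fun d hd ↦ ?_
  rw [← Algebra.smul_def, Fin.prod_univ_two]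
  exact Submodule.smul_mem _ _ (monomial_mem_lowerSpan (hg d hd))

lemma monomial_mem_lowerSpan_of_le (hlead : x ^ s * y ^ t ∈ lowerSpan R x y a b (b * s + a * t))
    {i j : ℕ} (hi : s ≤ i) (hj : t ≤ j) : x ^ i * y ^ j ∈ lowerSpan R x y a b (b * i + a * j) := by
  obtain ⟨k, rfl⟩ := Nat.exists_eq_add_of_le' hi
  obtain ⟨l, rfl⟩ := Nat.exists_eq_add_of_le' hj
  have hmul : x ^ (k + s) * y ^ (l + t) = x ^ k * y ^ l * (x ^ s * y ^ t) := by ring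
  rw [hmul]
  exact lowerSpan_mono (by linarith) (monomial_mul_mem_lowerSpan hlead k l)

lemma monomial_sub_monomial_mem_lowerSpan (hcurve : x ^ a - y ^ b ∈ lowerSpan R x y a b (a * b))
    (i j : ℕ) :
    x ^ (i + a) * y ^ j - x ^ i * y ^ (j + b) ∈ lowerSpan R x y a b (b * i + a * (j + b)) := by
  have hmul : x ^ (i + a) * y ^ j - x ^ i * y ^ (j + b) = x ^ i * y ^ j * (x ^ a - y ^ b) := by ring
  rw [hmul]
  exact lowerSpan_mono (by linarith) (monomial_mul_mem_lowerSpan hcurve i j)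

end LowerSpan

section Footprint

/-- The exponents `(i, j)` divisible by none of `(0, b)`, `(s, t)` and `(s + a, 0)`, for `t < b`:
the footprint of the ideal generated by the curve and an element with leading monomial
`x ^ s * y ^ t`. -/
def footprint (a b s t : ℕ) : Finset (ℕ × ℕ) :=
  Finset.range (s + a) ×ˢ Finset.range t ∪ Finset.range s ×ˢ Finset.Ico t b

variable {R A : Type*} [CommRing R] [CommRing A] [Algebra R A] {x y : A} {a b s t : ℕ}

lemma mem_footprint {i j : ℕ} :
    (i, j) ∈ footprint a b s t ↔ i < s + a ∧ j < t ∨ i < s ∧ t ≤ j ∧ j < b := by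
  simp [footprint]

lemma card_footprint_le (ht : t ≤ b) : (footprint a b s t).card ≤ b * s + a * t := by
  obtain ⟨r, rfl⟩ := Nat.exists_eq_add_of_le ht
  calc (footprint a (t + r) s t).card ≤ (s + a) * t + s * r :=
        (Finset.card_union_le _ _).trans (by simp)
    _ = (t + r) * s + a * t := by ring

variable (R x y a b s t) in
/-- The span of the monomials with exponents in the footprint. -/
def footprintSpan : Submodule R A :=
  Submodule.span R (Set.range fun p : footprint a b s t ↦ x ^ p.1.1 * y ^ p.1.2)

lemma monomial_mem_footprintSpan {i j : ℕ} (h : (i, j) ∈ footprint a b s t) :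
    x ^ i * y ^ j ∈ footprintSpan R x y a b s t :=
  Submodule.subset_span ⟨⟨(i, j), h⟩, rfl⟩

variable (hcurve : x ^ a - y ^ b ∈ lowerSpan R x y a b (a * b))
  (hlead : x ^ s * y ^ t ∈ lowerSpan R x y a b (b * s + a * t)) (ht : t < b)

include hcurve hlead ht

lemma monomial_mem_lowerSpan_of_add_le {i : ℕ} (hi : s + a ≤ i) (j : ℕ) :
    x ^ i * y ^ j ∈ lowerSpan R x y a b (b * i + a * j) := by
  obtain ⟨k, rfl⟩ := Nat.exists_eq_add_of_le hi
  have hswap := monomial_sub_monomial_mem_lowerSpan hcurve (s + k) j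
  have hmultiple :=
    monomial_mem_lowerSpan_of_le hlead (s.le_add_right k) (ht.le.trans (b.le_add_left j))
  rw [add_right_comm]
  exact (Submodule.sub_mem_iff_left _ (lowerSpan_mono (by linarith) hmultiple)).1
    (lowerSpan_mono (by linarith) hswap)

/-- The relation of the curve trades `y ^ b` for `x ^ a` without changing the weight, so the
induction that lowers the power of `y` is separate from the one on the weight. -/
lemma monomial_mem_lowerSpan_sup_footprintSpan (i j : ℕ) :
    x ^ i * y ^ j ∈ lowerSpan R x y a b (b * i + a * j) ⊔ footprintSpan R x y a b s t := by
  induction j using Nat.strong_induction_on generalizing i with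
  | _ j ih =>
    by_cases hfp : (i, j) ∈ footprint a b s t
    · exact Submodule.mem_sup_right (monomial_mem_footprintSpan hfp)
    rcases lt_or_ge j t with hj | hj
    · have hi : s + a ≤ i := by rw [mem_footprint] at hfp; omega
      exact Submodule.mem_sup_left (monomial_mem_lowerSpan_of_add_le hcurve hlead ht hi j)
    rcases le_or_gt s i with hi | hi
    · exact Submodule.mem_sup_left (monomial_mem_lowerSpan_of_le hlead hi hj)
    have hb : b ≤ j := by rw [mem_footprint] at hfp; omega
    obtain ⟨k, rfl⟩ := Nat.exists_eq_add_of_le' hb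
    have hswap := monomial_sub_monomial_mem_lowerSpan hcurve i k
    have hreduced := ih k (by omega) (i + a)
    have hweight : b * (i + a) + a * k = b * i + a * (k + b) := by ring
    rw [hweight] at hreduced
    exact (Submodule.sub_mem_iff_right _ hreduced).1 (Submodule.mem_sup_left hswap)

lemma lowerSpan_le_footprintSpan (w : ℕ) :
    lowerSpan R x y a b w ≤ footprintSpan R x y a b s t := by
  induction w with
  | zero => exact lowerSpan_le_iff.2 fun i j hij ↦ absurd hij (Nat.not_lt_zero _)
  | succ w ih =>
    refine lowerSpan_le_iff.2 fun i j hij ↦ ?_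
    exact sup_le ((lowerSpan_mono (Nat.lt_succ_iff.1 hij)).trans ih) le_rfl
      (monomial_mem_lowerSpan_sup_footprintSpan hcurve hlead ht i j)

lemma footprintSpan_eq_top (hgen : Algebra.adjoin R {x, y} = ⊤) :
    footprintSpan R x y a b s t = ⊤ := by
  rw [eq_top_iff, ← Algebra.top_toSubmodule, ← hgen, Algebra.adjoin_eq_span, Submodule.span_le]
  intro f hf
  obtain ⟨i, j, rfl⟩ := (Submonoid.mem_closure_pair x y f).1 hf
  exact lowerSpan_le_footprintSpan hcurve hlead ht _ (monomial_mem_lowerSpan (Nat.lt_succ_self _))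

theorem finrank_le_weight_of_adjoin_eq_top [Nontrivial R] (hgen : Algebra.adjoin R {x, y} = ⊤) :
    Module.finrank R A ≤ b * s + a * t :=
  calc Module.finrank R A = Module.finrank R (footprintSpan R x y a b s t) := by
        rw [footprintSpan_eq_top hcurve hlead ht hgen, finrank_top]
    _ ≤ Fintype.card (footprint a b s t) := finrank_range_le_card _
    _ = (footprint a b s t).card := Fintype.card_coe _
    _ ≤ b * s + a * t := card_footprint_le ht.le

end Footprint

section MonoSum2

variable {K A : Type*} [Field K] [CommRing A] [Algebra K A] {x y : A} {a b : ℕ}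

lemma aeval_monoSum2 (c : (ℕ × Fin b) →₀ K) :
    aeval ![x, y] (monoSum2 c) = c.sum fun p r ↦ r • (x ^ p.1 * y ^ (p.2 : ℕ)) := by
  simp [monoSum2, Finsupp.sum, Algebra.smul_def, mul_assoc]

lemma monoSum2_sub (c₁ c₂ : (ℕ × Fin b) →₀ K) :
    monoSum2 (c₁ - c₂) = monoSum2 c₁ - monoSum2 c₂ := by
  refine Finsupp.sum_sub_index (f := c₁) (g := c₂)
    (h := fun p r ↦ (C r * X 0 ^ p.1 * X 1 ^ (p.2 : ℕ) : MvPolynomial (Fin 2) K)) fun p r s ↦ ?_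
  rw [C_sub]; ring

lemma weight_injective (hab : a.Coprime b) :
    Function.Injective fun p : ℕ × Fin b ↦ b * p.1 + a * (p.2 : ℕ) := by
  rintro ⟨i, j⟩ ⟨k, l⟩ h
  have hmod : a * j ≡ a * l [MOD b] := by
    simpa [Nat.ModEq] using congrArg (· % b) h
  obtain rfl : j = l :=
    Fin.ext ((Nat.ModEq.cancel_left_of_coprime hab.symm hmod).eq_of_lt_of_lt j.2 l.2)
  simpa [j.pos.ne'] using h

lemma exists_leading_monomial (hab : a.Coprime b) {c : (ℕ × Fin b) →₀ K} (hc : c ≠ 0) :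
    ∃ m ∈ c.support, ∀ p ∈ c.support, p ≠ m →
      b * p.1 + a * (p.2 : ℕ) < b * m.1 + a * (m.2 : ℕ) := by
  obtain ⟨m, hm, hmax⟩ := c.support.exists_max_image
    (fun p ↦ b * p.1 + a * (p.2 : ℕ)) (Finsupp.support_nonempty_iff.2 hc)
  exact ⟨m, hm, fun p hp hne ↦ (hmax p hp).lt_of_ne ((weight_injective hab).ne hne)⟩

lemma leading_monomial_mem_lowerSpan {c : (ℕ × Fin b) →₀ K} (hz : aeval ![x, y] (monoSum2 c) = 0)
    {m : ℕ × Fin b} (hm : m ∈ c.support) (hmax : ∀ p ∈ c.support, p ≠ m →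
      b * p.1 + a * (p.2 : ℕ) < b * m.1 + a * (m.2 : ℕ)) :
    x ^ m.1 * y ^ (m.2 : ℕ) ∈ lowerSpan K x y a b (b * m.1 + a * (m.2 : ℕ)) := by
  classical
  rw [aeval_monoSum2, Finsupp.sum, ← Finset.add_sum_erase _ _ hm] at hz
  refine (Submodule.smul_mem_iff _ (Finsupp.mem_support_iff.1 hm)).1 ?_
  rw [eq_neg_of_add_eq_zero_left hz]
  refine neg_mem (Submodule.sum_mem _ fun p hp ↦ Submodule.smul_mem _ _ ?_)
  obtain ⟨hne, hp⟩ := Finset.mem_erase.1 hp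
  exact monomial_mem_lowerSpan (hmax p hp hne)

theorem finrank_le_of_aeval_monoSum2_eq_zero (hab : a.Coprime b)
    (hcurve : x ^ a - y ^ b ∈ lowerSpan K x y a b (a * b)) (hgen : Algebra.adjoin K {x, y} = ⊤)
    {c : (ℕ × Fin b) →₀ K} (hc : c ≠ 0) (hz : aeval ![x, y] (monoSum2 c) = 0)
    {u : ℕ} (hcu : ∀ p ∈ c.support, b * p.1 + a * (p.2 : ℕ) ≤ u) : Module.finrank K A ≤ u := by
  obtain ⟨m, hm, hmax⟩ := exists_leading_monomial hab hc
  have hlead := leading_monomial_mem_lowerSpan hz hm hmax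
  exact (finrank_le_weight_of_adjoin_eq_top hcurve hlead m.2.2 hgen).trans (hcu m hm)

end MonoSum2

section Points

variable {K ι : Type*} [Field K]

lemma subalgebra_eq_top_of_separatesPoints [Finite ι] {S : Subalgebra K (ι → K)}
    (hS : (S : Set (ι → K)).SeparatesPoints) : S = ⊤ := by
  let ev (i : ι) : S →ₐ[K] K := (Pi.evalAlgHom K (fun _ ↦ K) i).comp S.val
  have hev (i : ι) : Function.Surjective (ev i) := fun r ↦ ⟨algebraMap K S r, by simp [ev]⟩
  have hcop : Pairwise fun i j ↦ IsCoprime (RingHom.ker (ev i)) (RingHom.ker (ev j)) := by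
    intro i j hij
    obtain ⟨f, hfS, hf⟩ := hS hij
    have := RingHom.ker_isMaximal_of_surjective (ev i) (hev i)
    have := RingHom.ker_isMaximal_of_surjective (ev j) (hev j)
    refine Ideal.isCoprime_of_isMaximal fun hker ↦ hf ?_
    have hmem : (⟨f, hfS⟩ - algebraMap K S (f i) : S) ∈ RingHom.ker (ev j) := by
      rw [← hker]; simp [ev]
    simpa [ev, sub_eq_zero, eq_comm] using hmem
  refine eq_top_iff.2 fun f _ ↦ ?_
  obtain ⟨r, hr⟩ := Ideal.exists_forall_sub_mem_ideal hcop fun i ↦ algebraMap K S (f i)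
  have hrf : (r : ι → K) = f := funext fun i ↦ by simpa [ev, sub_eq_zero] using hr i
  exact hrf ▸ r.2

lemma adjoin_pair_eq_top [Finite ι] {x y : ι → K}
    (hinj : Function.Injective fun i ↦ (x i, y i)) : Algebra.adjoin K {x, y} = ⊤ := by
  refine subalgebra_eq_top_of_separatesPoints fun i j hij ↦ ?_
  have hne : x i ≠ x j ∨ y i ≠ y j := by
    simpa only [ne_eq, Prod.mk.injEq, not_and_or] using hinj.ne hij
  exact hne.elim (fun h ↦ ⟨x, Algebra.subset_adjoin (by simp), h⟩)
    (fun h ↦ ⟨y, Algebra.subset_adjoin (by simp), h⟩)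

lemma aeval_pi_apply (x y : ι → K) (p : MvPolynomial (Fin 2) K) (i : ι) :
    aeval ![x, y] p i = eval ![x i, y i] p := by
  have hpoint : (fun k ↦ Pi.evalAlgHom K (fun _ ↦ K) i (![x, y] k)) = ![x i, y i] := by
    funext k; fin_cases k <;> rfl
  rw [← coe_aeval_eq_eval, ← hpoint]
  exact comp_aeval_apply ![x, y] (Pi.evalAlgHom K (fun _ ↦ K) i) p

variable [Fintype ι] {a b u : ℕ} (hab : a.Coprime b)
  {g : MvPolynomial (Fin 2) K} (hg : ∀ d ∈ g.support, b * d 0 + a * d 1 < a * b)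
  {P : ι → K × K} (hPinj : Function.Injective P)
  (hPcurve : ∀ i, (P i).1 ^ a = (P i).2 ^ b + eval ![(P i).1, (P i).2] g)

include hab hg hPinj hPcurve

theorem card_le_of_forall_eval_monoSum2_eq_zero {c : (ℕ × Fin b) →₀ K} (hc : c ≠ 0)
    (hcu : ∀ p ∈ c.support, b * p.1 + a * (p.2 : ℕ) ≤ u)
    (hz : ∀ i, eval ![(P i).1, (P i).2] (monoSum2 c) = 0) : Fintype.card ι ≤ u := by
  let x : ι → K := fun i ↦ (P i).1
  let y : ι → K := fun i ↦ (P i).2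
  have hcurve : x ^ a - y ^ b = aeval ![x, y] g := funext fun i ↦ by
    simp [aeval_pi_apply, x, y, hPcurve]
  have hvanish : aeval ![x, y] (monoSum2 c) = 0 := funext fun i ↦ by
    rw [aeval_pi_apply]; exact hz i
  rw [← Module.finrank_fintype_fun_eq_card (R := K)]
  exact finrank_le_of_aeval_monoSum2_eq_zero hab (hcurve ▸ aeval_mem_lowerSpan hg)
    (adjoin_pair_eq_top hPinj) hc hvanish hcu

variable [DecidableEq K]

theorem card_filter_eval_monoSum2_eq_zero_le {c : (ℕ × Fin b) →₀ K} (hc : c ≠ 0)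
    (hcu : ∀ p ∈ c.support, b * p.1 + a * (p.2 : ℕ) ≤ u) :
    (Finset.univ.filter fun i ↦ eval ![(P i).1, (P i).2] (monoSum2 c) = 0).card ≤ u := by
  rw [← Fintype.card_coe]
  exact card_le_of_forall_eval_monoSum2_eq_zero hab hg
    (hPinj.comp Subtype.val_injective) (fun i ↦ hPcurve i) hc hcu
    fun i ↦ (Finset.mem_filter.1 i.2).2

theorem card_filter_eval_monoSum2_eq_le {c₁ c₂ : (ℕ × Fin b) →₀ K} (hne : c₁ ≠ c₂)
    (h₁ : ∀ p ∈ c₁.support, b * p.1 + a * (p.2 : ℕ) ≤ u)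
    (h₂ : ∀ p ∈ c₂.support, b * p.1 + a * (p.2 : ℕ) ≤ u) :
    (Finset.univ.filter fun i ↦ eval ![(P i).1, (P i).2] (monoSum2 c₁) =
      eval ![(P i).1, (P i).2] (monoSum2 c₂)).card ≤ u := by
  classical
  have hsub : ∀ p ∈ (c₁ - c₂).support, b * p.1 + a * (p.2 : ℕ) ≤ u := fun p hp ↦
    (Finset.mem_union.1 (Finsupp.support_sub hp)).elim (h₁ p) (h₂ p)
  simpa only [monoSum2_sub, map_sub, sub_eq_zero] using
    card_filter_eval_monoSum2_eq_zero_le hab hg hPinj hPcurve (sub_ne_zero.2 hne) hsub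

end Points

/-- The points lie on a `C_{a,b}` curve; the Hermitian curve is the case `a = q + 1`, `b = q` and
`g = Y`. -/
theorem stmt_10_general {K : Type*} [Field K] [DecidableEq K] {a b : ℕ} (hab : a.Coprime b)
    {g : MvPolynomial (Fin 2) K} (hg : ∀ d ∈ g.support, b * d 0 + a * d 1 < a * b)
    {n u : ℕ} (hun : u < n) {P : Fin n → K × K} (hPinj : Function.Injective P)
    (hPcurve : ∀ i, (P i).1 ^ a = (P i).2 ^ b + eval ![(P i).1, (P i).2] g) :
    (∀ c : (ℕ × Fin b) →₀ K, c ≠ 0 →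
      (∀ p ∈ c.support, b * p.1 + a * (p.2 : ℕ) ≤ u) →
      (Finset.univ.filter fun i ↦ eval ![(P i).1, (P i).2] (monoSum2 c) = 0).card ≤ u) ∧
    (∀ c₁ c₂ : (ℕ × Fin b) →₀ K,
      (∀ p ∈ c₁.support, b * p.1 + a * (p.2 : ℕ) ≤ u) →
      (∀ p ∈ c₂.support, b * p.1 + a * (p.2 : ℕ) ≤ u) →
      (∀ i, eval ![(P i).1, (P i).2] (monoSum2 c₁) =
        eval ![(P i).1, (P i).2] (monoSum2 c₂)) → c₁ = c₂) ∧
    (∀ c₁ c₂ : (ℕ × Fin b) →₀ K, c₁ ≠ c₂ →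
      (∀ p ∈ c₁.support, b * p.1 + a * (p.2 : ℕ) ≤ u) →
      (∀ p ∈ c₂.support, b * p.1 + a * (p.2 : ℕ) ≤ u) →
      n - u ≤ (Finset.univ.filter fun i ↦ eval ![(P i).1, (P i).2] (monoSum2 c₁) ≠
        eval ![(P i).1, (P i).2] (monoSum2 c₂)).card) := by
  refine ⟨fun c hc hcu ↦ card_filter_eval_monoSum2_eq_zero_le hab hg hPinj hPcurve hc hcu,
    fun c₁ c₂ h₁ h₂ heq ↦ ?_, fun c₁ c₂ hne h₁ h₂ ↦ ?_⟩
  · by_contra hne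
    have hagree := card_filter_eval_monoSum2_eq_le hab hg hPinj hPcurve hne h₁ h₂
    rw [Finset.filter_true_of_mem fun i _ ↦ heq i, Finset.card_fin] at hagree
    exact hun.not_ge hagree
  · have hagree := card_filter_eval_monoSum2_eq_le hab hg hPinj hPcurve hne h₁ h₂
    have hsplit := Finset.card_filter_add_card_filter_not (s := (Finset.univ : Finset (Fin n)))
      fun i ↦ eval ![(P i).1, (P i).2] (monoSum2 c₁) = eval ![(P i).1, (P i).2] (monoSum2 c₂)
    rw [Finset.card_fin] at hsplit
    simp only [ne_eq]
    omega

/-- Let `u < n = q³`. If `μ ∈ R` is nonzero with `deg_u(μ) ≤ u` (i.e. `μ ∈ L(uP∞)`), then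
`μ` vanishes at most at `u` of the points `P_i`. Consequently the evaluation map is
injective on `L(uP∞)`, and the Hermitian code `C_u = ev(L(uP∞))` has minimum distance at
least `n − u`. -/
theorem stmt_10 (q : ℕ) (hq : IsPrimePow q) (F : Type*) [Field F] [Fintype F] [DecidableEq F]
    (hF : Fintype.card F = q ^ 2)
    (u : ℕ) (hu : 1 ≤ u) (hun : u < q ^ 3)
    (P : Fin (q ^ 3) → F × F)
    (hPinj : Function.Injective P)
    (hPcurve : ∀ i, (P i).1 ^ (q + 1) = (P i).2 ^ q + (P i).2)
    (hPsurj : ∀ a b : F, a ^ (q + 1) = b ^ q + b → ∃ i, P i = (a, b)) :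
    -- a nonzero element of `L(uP∞)` vanishes at no more than `u` rational points
    (∀ c : (ℕ × Fin q) →₀ F, c ≠ 0 →
      (∀ p ∈ c.support, q * p.1 + (q + 1) * (p.2 : ℕ) ≤ u) →
      (Finset.univ.filter fun i : Fin (q ^ 3) =>
        MvPolynomial.eval ![(P i).1, (P i).2] (monoSum2 c) = 0).card ≤ u) ∧
    -- the evaluation map is injective on `L(uP∞)`
    (∀ c₁ c₂ : (ℕ × Fin q) →₀ F,
      (∀ p ∈ c₁.support, q * p.1 + (q + 1) * (p.2 : ℕ) ≤ u) →
      (∀ p ∈ c₂.support, q * p.1 + (q + 1) * (p.2 : ℕ) ≤ u) →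
      (∀ i : Fin (q ^ 3), MvPolynomial.eval ![(P i).1, (P i).2] (monoSum2 c₁) =
        MvPolynomial.eval ![(P i).1, (P i).2] (monoSum2 c₂)) → c₁ = c₂) ∧
    -- minimum distance of the Hermitian code `C_u` is at least `n − u`
    (∀ c₁ c₂ : (ℕ × Fin q) →₀ F, c₁ ≠ c₂ →
      (∀ p ∈ c₁.support, q * p.1 + (q + 1) * (p.2 : ℕ) ≤ u) →
      (∀ p ∈ c₂.support, q * p.1 + (q + 1) * (p.2 : ℕ) ≤ u) →
      q ^ 3 - u ≤ (Finset.univ.filter fun i : Fin (q ^ 3) =>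
        MvPolynomial.eval ![(P i).1, (P i).2] (monoSum2 c₁) ≠
          MvPolynomial.eval ![(P i).1, (P i).2] (monoSum2 c₂)).card) := by
  exact stmt_10_general (g := X 1) (by simp) (by simp [support_X, hq.one_lt]) hun hPinj
    (by simpa using hPcurve)
end

section
/- Let m and l be positive integers and v ∈ F^n. Let R[z]_l = {f ∈ R[z] : deg_z(f) ≤ l} and I_{v,m,l} = I_{v,m} ∩ R[z]_l, where I_{v,m} = ⟨z − h_v, η⟩^m. Then, as a module over R, I_{v,m,l} is generated by G_0, G_1, …, G_l, where G_i = (z − h_v)^i η^{m−i} for 0 ≤ i ≤ m and G_i = z^{i−m}(z − h_v)^m for m < i ≤ l. -/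
set_option synthInstance.maxHeartbeats 1000000
set_option maxHeartbeats 1000000

open MvPolynomial

/-!
Expand `f` in powers of `z - h`. Since `z - h` and `η` evaluate at `z = h` to multiples of `η`,
membership of `f` in `⟨z - h, η⟩ ^ m` makes `η ^ (m - i)` divide the `i`-th coefficient. So the
terms with `i ≤ m` are multiples of `G_i`, while a term with `i > m` is `(z - h) ^ m` times
a polynomial of degree `i - m`, hence a combination of `G_m, …, G_i`.
-/

section

open Polynomial hiding X C

/-- In a product of `m` factors at most `i` of them contribute a positive power of `z - h` to the
`i`-th Taylor coefficient; the other factors contribute their values at `h`. -/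
theorem taylor_coeff_mem_pow_sub_of_mem_pow {R : Type*} [CommSemiring R] {I : Ideal R[X]}
    {J : Ideal R} {h : R} (hIJ : I ≤ J.comap (evalRingHom h)) {m : ℕ} {f : R[X]}
    (hf : f ∈ I ^ m) (i : ℕ) : (taylor h f).coeff i ∈ J ^ (m - i) := by
  induction m generalizing f i with
  | zero => simp
  | succ m ih =>
    rw [pow_succ] at hf
    induction hf using Submodule.mul_induction_on' generalizing i with
    | mem_mul_mem a ha b hb =>
      rw [taylor_mul, Polynomial.coeff_mul]
      refine Ideal.sum_mem _ fun ⟨j, k⟩ hjk => ?_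
      rw [Finset.HasAntidiagonal.mem_antidiagonal] at hjk
      have hbk : (taylor h b).coeff k ∈ J ^ (1 - k) := by
        cases k with
        | zero => simpa using hIJ hb
        | succ k => simp
      have hprod := Ideal.mul_mem_mul (ih ha j) hbk
      rw [← pow_add] at hprod
      exact Ideal.pow_le_pow_right (by omega) hprod
    | add a _ b _ iha ihb =>
      rw [map_add, Polynomial.coeff_add]
      exact add_mem (iha i) (ihb i)

theorem mul_mem_of_forall_X_pow_mul_mem {R : Type*} [Semiring R] {N : Submodule R R[X]}
    {p g : R[X]} {k : ℕ} (hp : p.natDegree ≤ k) (hN : ∀ j ≤ k, Polynomial.X ^ j * g ∈ N) :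
    p * g ∈ N := by
  rw [p.as_sum_range_C_mul_X_pow' (Nat.lt_succ_of_le hp), Finset.sum_mul]
  refine Submodule.sum_mem _ fun j hj => ?_
  rw [mul_assoc, ← Polynomial.smul_eq_C_mul]
  exact N.smul_mem _ (hN j (Finset.mem_range_succ_iff.mp hj))

theorem natDegree_X_sub_C_pow_le {R : Type*} [Ring R] (h : R) (k : ℕ) :
    ((Polynomial.X - Polynomial.C h) ^ k).natDegree ≤ k := by
  simpa using natDegree_pow_le_of_le k (natDegree_X_sub_C_le h)

variable {R : Type*} [CommRing R]

/-- The ideal `⟨z - h, η⟩` of `R[z]`, whose `m`-th power is the ideal `I_{v,m}` for `h = h_v`. -/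
noncomputable def interpolationIdeal (h η : R) : Ideal R[X] :=
  Ideal.span {Polynomial.X - Polynomial.C h, Polynomial.C η}

/-- The polynomial `G_i`: `(z - h) ^ i * η ^ (m - i)` for `i ≤ m`, and
`z ^ (i - m) * (z - h) ^ m` for `i > m`. These generate the elements of
`interpolationIdeal h η ^ m` of bounded degree. -/
noncomputable def interpolationGenerator (h η : R) (m i : ℕ) : R[X] :=
  if i ≤ m then (Polynomial.X - Polynomial.C h) ^ i * Polynomial.C (η ^ (m - i))
  else Polynomial.X ^ (i - m) * (Polynomial.X - Polynomial.C h) ^ m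

theorem X_sub_C_mem_interpolationIdeal (h η : R) :
    Polynomial.X - Polynomial.C h ∈ interpolationIdeal h η :=
  Ideal.subset_span (Set.mem_insert _ _)

theorem C_mem_interpolationIdeal (h η : R) : Polynomial.C η ∈ interpolationIdeal h η :=
  Ideal.subset_span (Set.mem_insert_of_mem _ rfl)

theorem interpolationIdeal_le_comap_evalRingHom (h η : R) :
    interpolationIdeal h η ≤ (Ideal.span {η}).comap (evalRingHom h) := by
  rw [interpolationIdeal, Ideal.span_le, Set.pair_subset_iff]
  simp

theorem pow_sub_dvd_taylor_coeff_of_mem_interpolationIdeal_pow {h η : R} {m : ℕ} {f : R[X]}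
    (hf : f ∈ interpolationIdeal h η ^ m) (i : ℕ) : η ^ (m - i) ∣ (taylor h f).coeff i := by
  rw [← Ideal.mem_span_singleton, ← Ideal.span_singleton_pow]
  exact taylor_coeff_mem_pow_sub_of_mem_pow (interpolationIdeal_le_comap_evalRingHom h η) hf i

theorem interpolationGenerator_of_le (h η : R) {m i : ℕ} (him : i ≤ m) :
    interpolationGenerator h η m i =
      (Polynomial.X - Polynomial.C h) ^ i * Polynomial.C (η ^ (m - i)) :=
  if_pos him

theorem interpolationGenerator_add (h η : R) (m j : ℕ) :
    interpolationGenerator h η m (m + j) =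
      Polynomial.X ^ j * (Polynomial.X - Polynomial.C h) ^ m := by
  cases j <;> simp [interpolationGenerator]

theorem interpolationGenerator_mem_pow (h η : R) (m i : ℕ) :
    interpolationGenerator h η m i ∈ interpolationIdeal h η ^ m := by
  have hX := X_sub_C_mem_interpolationIdeal h η
  obtain him | ⟨j, rfl⟩ := (le_total i m).imp_right Nat.exists_eq_add_of_le
  · have hprod := Ideal.mul_mem_mul (Ideal.pow_mem_pow hX i)
      (Ideal.pow_mem_pow (C_mem_interpolationIdeal h η) (m - i))
    rwa [← pow_add, Nat.add_sub_cancel' him, ← Polynomial.C_pow,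
      ← interpolationGenerator_of_le h η him] at hprod
  · rw [interpolationGenerator_add]
    exact Ideal.mul_mem_left _ _ (Ideal.pow_mem_pow hX m)

theorem natDegree_interpolationGenerator_le (h η : R) (m i : ℕ) :
    (interpolationGenerator h η m i).natDegree ≤ i := by
  obtain him | ⟨j, rfl⟩ := (le_total i m).imp_right Nat.exists_eq_add_of_le
  · rw [interpolationGenerator_of_le h η him]
    exact (natDegree_mul_C_le _ _).trans (natDegree_X_sub_C_pow_le h i)
  · rw [interpolationGenerator_add, add_comm m j]
    exact natDegree_mul_le_of_le (natDegree_X_pow_le j) (natDegree_X_sub_C_pow_le h m)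

theorem C_mul_X_sub_C_pow_mem_of_interpolationGenerator_mem {h η c : R} {m i : ℕ}
    {N : Submodule R R[X]} (hN : ∀ j ≤ i, interpolationGenerator h η m j ∈ N)
    (hc : η ^ (m - i) ∣ c) :
    Polynomial.C c * (Polynomial.X - Polynomial.C h) ^ i ∈ N := by
  obtain him | ⟨k, rfl⟩ := (le_total i m).imp_right Nat.exists_eq_add_of_le
  · obtain ⟨d, rfl⟩ := hc
    have hterm : Polynomial.C (η ^ (m - i) * d) * (Polynomial.X - Polynomial.C h) ^ i =
        d • interpolationGenerator h η m i := by
      rw [interpolationGenerator_of_le h η him, Polynomial.smul_eq_C_mul, Polynomial.C_mul]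
      ring
    exact hterm ▸ N.smul_mem d (hN i le_rfl)
  · rw [← Polynomial.smul_eq_C_mul, add_comm m k, pow_add]
    refine N.smul_mem c (mul_mem_of_forall_X_pow_mul_mem (natDegree_X_sub_C_pow_le h k) ?_)
    intro j hj
    rw [← interpolationGenerator_add h η]
    exact hN (m + j) (by omega)

theorem stmt_11_general (h η : R) (m l : ℕ) :
    Submodule.restrictScalars R (interpolationIdeal h η ^ m) ⊓ degreeLE R (l : ℕ) =
      Submodule.span R (Set.range fun i : Fin (l + 1) => interpolationGenerator h η m i) := by
  apply le_antisymm
  · rintro f ⟨hfI, hfdeg⟩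
    have hfl : f.natDegree ≤ l := natDegree_le_of_degree_le (mem_degreeLE.mp hfdeg)
    rw [← sum_taylor_eq f h]
    refine Submodule.sum_mem _ fun i hi => ?_
    have hil : i ≤ l := (le_natDegree_of_mem_supp i hi).trans (by rwa [natDegree_taylor])
    refine C_mul_X_sub_C_pow_mem_of_interpolationGenerator_mem (fun j hj => ?_)
      (pow_sub_dvd_taylor_coeff_of_mem_interpolationIdeal_pow hfI i)
    exact Submodule.subset_span ⟨⟨j, by omega⟩, rfl⟩
  · rw [Submodule.span_le]
    rintro _ ⟨i, rfl⟩
    refine ⟨interpolationGenerator_mem_pow h η m i, ?_⟩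
    have hdeg := (natDegree_interpolationGenerator_le h η m i).trans (Nat.le_of_lt_succ i.isLt)
    exact mem_degreeLE.mpr (degree_le_of_natDegree_le hdeg)

end

/-- Let `m`, `l` be positive integers and `v ∈ F^n`. Then `I_{v,m,l} = I_{v,m} ∩ R[z]_l`
(`I_{v,m} = ⟨z − h_v, η⟩^m`, `R[z]_l` the polynomials of `z`-degree at most `l`), as a
module over `R`, is generated by `G_0, …, G_l`, where `G_i = (z − h_v)^i η^{m−i}` for
`0 ≤ i ≤ m` and `G_i = z^{i−m}(z − h_v)^m` for `m < i ≤ l`. -/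
theorem stmt_11 (q : ℕ) (hq : IsPrimePow q) (F : Type*) [Field F] [Fintype F] [DecidableEq F]
    (hF : Fintype.card F = q ^ 2)
    (m l : ℕ) (hm : 1 ≤ m) (hl : 1 ≤ l)
    (P : Fin (q ^ 3) → F × F)
    (hPinj : Function.Injective P)
    (hPcurve : ∀ i, (P i).1 ^ (q + 1) = (P i).2 ^ q + (P i).2)
    (hPsurj : ∀ a b : F, a ^ (q + 1) = b ^ q + b → ∃ i, P i = (a, b))
    (v : Fin (q ^ 3) → F)
    -- `R`, `h_v`, `η`
    (R : Type*) [CommRing R] (mk : MvPolynomial (Fin 2) F →+* R)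
    (hmk : Function.Surjective mk)
    (hker : RingHom.ker mk =
      Ideal.span {(X 0 : MvPolynomial (Fin 2) F) ^ (q + 1) - X 1 ^ q - X 1})
    (hv η : R)
    (hhv : hv = mk (∑ i, C (v i) * Hpoly q (P i).1 (P i).2))
    (hη : η = mk ((X 0 : MvPolynomial (Fin 2) F) ^ (q ^ 2) - X 0)) :
    Submodule.restrictScalars R
        ((Ideal.span {Polynomial.X - Polynomial.C hv, Polynomial.C η} :
          Ideal (Polynomial R)) ^ m) ⊓
      Polynomial.degreeLE R (l : ℕ) =
    Submodule.span R (Set.range fun i : Fin (l + 1) =>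
      if (i : ℕ) ≤ m then
        (Polynomial.X - Polynomial.C hv) ^ (i : ℕ) * Polynomial.C (η ^ (m - (i : ℕ)))
      else
        Polynomial.X ^ ((i : ℕ) - m) * (Polynomial.X - Polynomial.C hv) ^ m) :=
  stmt_11_general hv η m l
end
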